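/- Let N ≥ 2, 1 < p ≤ N and p − 1 < q < q_c, and let Ω ⊆ ℝ^N be an open set containing the closed unit ball. Let u be a strong solution of (E) on Ω ∖ {0} with u ≥ 0 on Ω ∖ {0}, and assume liminf_{x→0} u(x)/μ_p(x) < ∞. Then there exists k ≥ 0 such that lim_{x→0} u(x)/μ_p(x) = k. -/

import Mathlib

open Metric Set Filter Topology MeasureTheory

/-- The vector field `x ↦ |∇u(x)|^{p-2} ∇u(x)`. -/
noncomputable def pGradField {N : ℕ} (p : ℝ) (u : EuclideanSpace ℝ (Fin N) → ℝ)
    (x : EuclideanSpace ℝ (Fin N)) : EuclideanSpace ℝ (Fin N) :=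
  ‖gradient u x‖ ^ (p - 2) • gradient u x

/-- A strong solution of `(E) : -Δ_p u + |∇u|^q = 0` on an open set `G ⊆ ℝ^N`. -/
def IsStrongSolution {N : ℕ} (p q : ℝ) (G : Set (EuclideanSpace ℝ (Fin N)))
    (u : EuclideanSpace ℝ (Fin N) → ℝ) : Prop :=
  ContDiffOn ℝ 1 u G ∧
  ContDiffOn ℝ 3 u {x | x ∈ G ∧ gradient u x ≠ 0} ∧
  ∀ x ∈ G, DifferentiableAt ℝ (pGradField p u) x ∧
    LinearMap.trace ℝ (EuclideanSpace ℝ (Fin N))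
      (fderiv ℝ (pGradField p u) x : EuclideanSpace ℝ (Fin N) →ₗ[ℝ] EuclideanSpace ℝ (Fin N))
      = ‖gradient u x‖ ^ q

/-- The fundamental solution of the p-Laplacian in `ℝ^N`. -/
noncomputable def mup (N : ℕ) (p : ℝ) (x : EuclideanSpace ℝ (Fin N)) : ℝ :=
  if p < N then ((p - 1) / ((N : ℝ) - p)) * ‖x‖ ^ ((p - (N : ℝ)) / (p - 1))
  else -Real.log ‖x‖

section Hess

variable {E : Type*} [NormedAddCommGroup E] [InnerProductSpace ℝ E]

/-- The quadratic form `v ↦ ⟪c, v⟫ c` as an endomorphism. -/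
noncomputable def rankOne (c : E) : E →L[ℝ] E := (innerSL ℝ c).smulRight c

theorem rankOne_apply (c v : E) : rankOne c v = inner ℝ c v • c := by
  simp [rankOne]

variable [CompleteSpace E]

/-- `f` is differentiable near `x`, with gradient `g` at `x`, and its gradient map has derivative
`B` at `x`. -/
def HasHess (f : E → ℝ) (x g : E) (B : E →L[ℝ] E) : Prop :=
  ∃ G : E → E, (∀ᶠ y in 𝓝 x, HasGradientAt f (G y) y) ∧ G x = g ∧ HasFDerivAt G B x

theorem hasGradientAt_iff_innerSL {f : E → ℝ} {g x : E} :
    HasGradientAt f g x ↔ HasFDerivAt f (innerSL ℝ g) x :=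
  hasGradientAt_iff_hasFDerivAt

theorem hasGradientAt_of_hasFDerivAt {f : E → ℝ} {L : E →L[ℝ] ℝ} {g x : E}
    (h : HasFDerivAt f L x) (hL : ∀ v, L v = inner ℝ g v) : HasGradientAt f g x := by
  rw [hasGradientAt_iff_innerSL]
  refine h.congr_fderiv ?_
  ext v
  simp [hL]

theorem HasHess.sub {f₁ f₂ : E → ℝ} {x g₁ g₂ : E} {B₁ B₂ : E →L[ℝ] E}
    (h₁ : HasHess f₁ x g₁ B₁) (h₂ : HasHess f₂ x g₂ B₂) :
    HasHess (fun y => f₁ y - f₂ y) x (g₁ - g₂) (B₁ - B₂) := by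
  obtain ⟨G₁, e₁, r₁, d₁⟩ := h₁
  obtain ⟨G₂, e₂, r₂, d₂⟩ := h₂
  refine ⟨fun y => G₁ y - G₂ y, ?_, by simp [r₁, r₂], d₁.sub d₂⟩
  filter_upwards [e₁, e₂] with y h₁ h₂
  rw [hasGradientAt_iff_innerSL] at *
  rw [map_sub]
  exact h₁.sub h₂

theorem HasHess.add {f₁ f₂ : E → ℝ} {x g₁ g₂ : E} {B₁ B₂ : E →L[ℝ] E}
    (h₁ : HasHess f₁ x g₁ B₁) (h₂ : HasHess f₂ x g₂ B₂) :
    HasHess (fun y => f₁ y + f₂ y) x (g₁ + g₂) (B₁ + B₂) := by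
  obtain ⟨G₁, e₁, r₁, d₁⟩ := h₁
  obtain ⟨G₂, e₂, r₂, d₂⟩ := h₂
  refine ⟨fun y => G₁ y + G₂ y, ?_, by simp [r₁, r₂], d₁.add d₂⟩
  filter_upwards [e₁, e₂] with y h₁ h₂
  rw [hasGradientAt_iff_innerSL] at *
  rw [map_add]
  exact h₁.add h₂

theorem HasHess.const_mul {f : E → ℝ} {x g : E} {B : E →L[ℝ] E} (c : ℝ)
    (h : HasHess f x g B) : HasHess (fun y => c * f y) x (c • g) (c • B) := by
  obtain ⟨G, e, r, d⟩ := h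
  refine ⟨fun y => c • G y, ?_, by simp [r], d.const_smul c⟩
  filter_upwards [e] with y h
  refine hasGradientAt_of_hasFDerivAt ((hasGradientAt_iff_innerSL.1 h).const_mul c) fun v => ?_
  simp [inner_smul_left]

theorem HasHess.comp_smul {f : E → ℝ} {x g : E} {B : E →L[ℝ] E} {s : ℝ}
    (h : HasHess f (s • x) g B) :
    HasHess (fun y => f (s • y)) x (s • g) ((s ^ 2) • B) := by
  obtain ⟨G, e, r, d⟩ := h
  have hs : ∀ y : E, HasFDerivAt (fun y : E => s • y) (s • ContinuousLinearMap.id ℝ E) y :=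
    fun y => (hasFDerivAt_id y).const_smul s
  refine ⟨fun y => s • G (s • y), ?_, by simp [r], ?_⟩
  · have : Tendsto (fun y : E => s • y) (𝓝 x) (𝓝 (s • x)) := (hs x).continuousAt
    filter_upwards [this.eventually e] with y hy
    rw [hasGradientAt_iff_innerSL] at hy
    refine hasGradientAt_of_hasFDerivAt (HasFDerivAt.comp y hy (hs y)) fun v => ?_
    simp [inner_smul_left]
  · refine ((HasFDerivAt.comp x d (hs x)).const_smul s).congr_fderiv ?_
    ext v
    simp [pow_two, smul_smul]

theorem hasHess_radial {F F' : ℝ → ℝ} {F'' : ℝ} {x c : E}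
    (h1 : ∀ᶠ t in 𝓝 (‖x - c‖ ^ 2), HasDerivAt F (F' t) t)
    (h2 : HasDerivAt F' F'' (‖x - c‖ ^ 2)) :
    HasHess (fun y => F (‖y - c‖ ^ 2)) x ((2 * F' (‖x - c‖ ^ 2)) • (x - c))
      ((2 * F' (‖x - c‖ ^ 2)) • ContinuousLinearMap.id ℝ E + (4 * F'') • rankOne (x - c)) := by
  have hn : ∀ y : E, HasFDerivAt (fun y : E => ‖y - c‖ ^ 2)
      (2 • (innerSL ℝ (y - c)).comp (ContinuousLinearMap.id ℝ E)) y :=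
    fun y => ((hasFDerivAt_id y).sub_const c).norm_sq
  refine ⟨fun y => (2 * F' (‖y - c‖ ^ 2)) • (y - c), ?_, rfl, ?_⟩
  · have : Tendsto (fun y : E => ‖y - c‖ ^ 2) (𝓝 x) (𝓝 (‖x - c‖ ^ 2)) := (hn x).continuousAt
    filter_upwards [this.eventually h1] with y hy
    refine hasGradientAt_of_hasFDerivAt (hy.comp_hasFDerivAt y (hn y)) fun v => ?_
    simp [inner_smul_left, inner_sub_left]
    ring
  · have h3 : HasFDerivAt (fun y : E => 2 * F' (‖y - c‖ ^ 2)) _ x :=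
      (h2.comp_hasFDerivAt x (hn x)).const_mul 2
    refine (h3.smul ((hasFDerivAt_id x).sub_const c)).congr_fderiv ?_
    ext v
    simp [rankOne_apply, smul_smul, inner_sub_left]
    congr 1
    ring

/-- First and second order necessary conditions at a local maximum. -/
theorem HasHess.of_isLocalMax {f : E → ℝ} {x g : E} {B : E →L[ℝ] E} (h : HasHess f x g B)
    (hm : IsLocalMax f x) : g = 0 ∧ ∀ v, inner ℝ v (B v) ≤ 0 := by
  obtain ⟨G, e, r, d⟩ := h
  have hg0 : g = 0 := by
    have h1 := e.self_of_nhds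
    rw [hasGradientAt_iff_innerSL] at h1
    have h2 := hm.hasFDerivAt_eq_zero h1
    rw [r] at h2
    have h3 : inner ℝ g g = 0 := congrArg (fun L : E →L[ℝ] ℝ => L g) h2
    exact inner_self_eq_zero.1 h3
  refine ⟨hg0, fun v => ?_⟩
  by_contra! hpos
  have hline : ∀ t : ℝ, HasDerivAt (fun t : ℝ => x + t • v) v t := fun t => by
    simpa using ((hasDerivAt_id t).smul_const v).const_add x
  have htend : Tendsto (fun t : ℝ => x + t • v) (𝓝 0) (𝓝 x) := by
    simpa using (hline 0).continuousAt.tendsto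
  set φ : ℝ → ℝ := fun t => f (x + t • v) with hφ
  have h1 : ∀ᶠ t in 𝓝 (0 : ℝ), HasDerivAt φ (inner ℝ v (G (x + t • v))) t := by
    filter_upwards [htend.eventually e] with t ht
    rw [hasGradientAt_iff_innerSL] at ht
    refine (ht.comp_hasDerivAt t (hline t)).congr_deriv ?_
    simp [real_inner_comm]
  have hderiv : deriv φ =ᶠ[𝓝 0] fun t => inner ℝ v (G (x + t • v)) := by
    filter_upwards [h1] with t ht using ht.deriv
  have hdd : HasDerivAt (fun t : ℝ => inner ℝ v (G (x + t • v))) (inner ℝ v (B v)) 0 := by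
    have d' : HasFDerivAt G B (x + (0 : ℝ) • v) := by simpa using d
    exact (innerSL ℝ v).hasFDerivAt.comp_hasDerivAt (0 : ℝ) (d'.comp_hasDerivAt 0 (hline 0))
  have hdd' : deriv (deriv φ) 0 = inner ℝ v (B v) := by
    rw [hderiv.deriv_eq, hdd.deriv]
  have hmin : IsLocalMin φ 0 := by
    refine isLocalMin_of_deriv_deriv_pos (by rw [hdd']; exact hpos) ?_
      h1.self_of_nhds.continuousAt
    rw [hderiv.self_of_nhds]
    simp [r, hg0]
  have hmax : IsLocalMax φ 0 := by
    have : ∀ᶠ t in 𝓝 (0 : ℝ), f (x + t • v) ≤ f x := htend.eventually hm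
    filter_upwards [this] with t ht
    simpa [hφ] using ht
  have hconst : φ =ᶠ[𝓝 0] fun _ => φ 0 := by
    filter_upwards [hmin, hmax] with t h1 h2 using le_antisymm h2 h1
  have : deriv (deriv φ) 0 = 0 := by
    have h4 : deriv φ =ᶠ[𝓝 0] fun _ => 0 := by
      filter_upwards [hconst.deriv] with t ht
      rw [ht]
      simp
    rw [h4.deriv_eq]
    simp
  rw [hdd'] at this
  linarith

end Hess

section PForm

variable {E : Type*} [NormedAddCommGroup E] [InnerProductSpace ℝ E]

/-- The normalised `p`-Laplacian form `|g|² tr B + (p - 2) ⟪g, B g⟫`. -/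
noncomputable def pForm (p : ℝ) (g : E) (B : E →L[ℝ] E) : ℝ :=
  ‖g‖ ^ 2 * LinearMap.trace ℝ E (B : E →ₗ[ℝ] E) + (p - 2) * inner ℝ g (B g)

theorem pForm_add (p : ℝ) (g : E) (B C : E →L[ℝ] E) :
    pForm p g (B + C) = pForm p g B + pForm p g C := by
  simp [pForm, inner_add_right]
  ring

theorem pForm_sub (p : ℝ) (g : E) (B C : E →L[ℝ] E) :
    pForm p g (B - C) = pForm p g B - pForm p g C := by
  simp [pForm, inner_sub_right]
  ring

theorem pForm_smul (p c : ℝ) (g : E) (B : E →L[ℝ] E) :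
    pForm p g (c • B) = c * pForm p g B := by
  simp [pForm, inner_smul_right]
  ring

theorem pForm_smul_left (p c : ℝ) (g : E) (B : E →L[ℝ] E) :
    pForm p (c • g) B = c ^ 2 * pForm p g B := by
  simp [pForm, inner_smul_right, inner_smul_left, norm_smul, mul_pow]
  ring

variable [FiniteDimensional ℝ E]

theorem trace_rankOne (c : E) :
    LinearMap.trace ℝ E (rankOne c : E →ₗ[ℝ] E) = ‖c‖ ^ 2 := by
  rw [LinearMap.trace_eq_sum_inner _ (stdOrthonormalBasis ℝ E),
    ← (stdOrthonormalBasis ℝ E).sum_sq_norm_inner_right c]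
  refine Finset.sum_congr rfl fun i _ => ?_
  simp [rankOne_apply, inner_smul_right, real_inner_comm c, pow_two]

theorem pForm_id (p : ℝ) (g : E) :
    pForm p g (ContinuousLinearMap.id ℝ E) = (Module.finrank ℝ E + p - 2) * ‖g‖ ^ 2 := by
  have : LinearMap.trace ℝ E ((ContinuousLinearMap.id ℝ E : E →L[ℝ] E) : E →ₗ[ℝ] E)
      = Module.finrank ℝ E := by
    simp
  rw [pForm, this]
  simp
  ring

theorem pForm_rankOne (p : ℝ) (g c : E) :
    pForm p g (rankOne c) = ‖g‖ ^ 2 * ‖c‖ ^ 2 + (p - 2) * inner ℝ g c ^ 2 := by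
  rw [pForm, trace_rankOne, rankOne_apply, inner_smul_right, real_inner_comm g c]
  ring

theorem exists_orthonormalBasis_zero {n : ℕ} (hn : Module.finrank ℝ E = n + 1) {g : E}
    (hg : g ≠ 0) : ∃ b : OrthonormalBasis (Fin (n + 1)) ℝ E, g = ‖g‖ • b 0 := by
  have hv : Orthonormal ℝ (({0} : Set (Fin (n + 1))).domRestrict fun _ => (‖g‖⁻¹ • g)) := by
    constructor
    · rintro ⟨i, hi⟩
      simp [norm_smul, hg]
    · rintro ⟨i, hi⟩ ⟨j, hj⟩ hij
      exact absurd (Subtype.ext ((Set.mem_singleton_iff.1 hi).trans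
        (Set.mem_singleton_iff.1 hj).symm)) hij
  obtain ⟨b, hb⟩ := hv.exists_orthonormalBasis_extension_of_card_eq (by simp [hn])
  refine ⟨b, ?_⟩
  rw [hb 0 rfl, smul_smul, mul_inv_cancel₀ (norm_ne_zero_iff.2 hg), one_smul]

theorem inner_le_trace {B : E →L[ℝ] E} (hB : ∀ v, 0 ≤ inner ℝ v (B v)) (g : E) :
    inner ℝ g (B g) ≤ ‖g‖ ^ 2 * LinearMap.trace ℝ E (B : E →ₗ[ℝ] E) := by
  rcases eq_or_ne g 0 with rfl | hg
  · simp
  obtain ⟨n, hn⟩ : ∃ n, Module.finrank ℝ E = n + 1 := by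
    have : Nontrivial E := ⟨g, 0, hg⟩
    exact ⟨_, (Nat.succ_pred_eq_of_pos Module.finrank_pos).symm⟩
  obtain ⟨b, hb⟩ := exists_orthonormalBasis_zero hn hg
  rw [LinearMap.trace_eq_sum_inner _ b]
  have h1 : inner ℝ g (B g) = ‖g‖ ^ 2 * inner ℝ (b 0) (B (b 0)) := by
    conv_lhs => rw [hb]
    simp [inner_smul_left, inner_smul_right]
    ring
  rw [h1]
  refine mul_le_mul_of_nonneg_left ?_ (by positivity)
  exact Finset.single_le_sum (f := fun i => inner ℝ (b i) (B (b i))) (fun i _ => hB (b i))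
    (Finset.mem_univ 0)

theorem pForm_nonneg {p : ℝ} (hp : 1 ≤ p) {B : E →L[ℝ] E} (hB : ∀ v, 0 ≤ inner ℝ v (B v))
    (g : E) : 0 ≤ pForm p g B := by
  have h1 := inner_le_trace hB g
  have h2 := hB g
  rw [pForm]
  nlinarith

theorem pForm_nonpos {p : ℝ} (hp : 1 ≤ p) {B : E →L[ℝ] E} (hB : ∀ v, inner ℝ v (B v) ≤ 0)
    (g : E) : pForm p g B ≤ 0 := by
  have := pForm_nonneg hp (B := (-1 : ℝ) • B) (fun v => by simpa using hB v) g
  rw [pForm_smul] at this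
  linarith

end PForm

section Scalar

/-- The coercivity constant of the form `(y - (p-1) γ)² / n + 2 a y γ` on `y, γ ≥ 0`. -/
noncomputable def coer (n p a : ℝ) : ℝ := min 1 (a * n / (p - 1)) / n * min 1 ((p - 1) ^ 2)

theorem coer_pos {n p a : ℝ} (hn : 0 < n) (hp : 1 < p) (ha : 0 < a) : 0 < coer n p a := by
  have : 0 < p - 1 := by linarith
  unfold coer
  positivity

theorem coer_le {n p a y γ : ℝ} (hn : 0 < n) (hp : 1 < p) (ha : 0 < a) (hy : 0 ≤ y)
    (hγ : 0 ≤ γ) :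
    coer n p a * (y ^ 2 + γ ^ 2) ≤ 1 / n * (y - (p - 1) * γ) ^ 2 + 2 * a * y * γ := by
  have hp' : 0 < p - 1 := by linarith
  set lam := min 1 (a * n / (p - 1)) with hlam
  have h0 : 0 < lam := by positivity
  have h1 : lam ≤ 1 := min_le_left _ _
  have h2 : lam * (p - 1) ≤ a * n := by
    have : lam ≤ a * n / (p - 1) := min_le_right _ _
    rwa [le_div_iff₀ hp'] at this
  have hyγ : 0 ≤ y * γ := mul_nonneg hy hγ
  have h3 : lam / n * (y ^ 2 + (p - 1) ^ 2 * γ ^ 2)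
      ≤ 1 / n * (y - (p - 1) * γ) ^ 2 + 2 * a * y * γ := by
    rw [div_mul_eq_mul_div, one_div_mul_eq_div, div_add' _ _ _ hn.ne', div_le_div_iff_of_pos_right hn]
    nlinarith [mul_nonneg (sub_nonneg.2 h1) (sq_nonneg (y - (p - 1) * γ)),
      mul_nonneg (sub_nonneg.2 h2) hyγ]
  refine le_trans ?_ h3
  rw [coer, mul_assoc]
  refine mul_le_mul_of_nonneg_left ?_ (by positivity)
  have h4 : min 1 ((p - 1) ^ 2) ≤ 1 := min_le_left _ _
  have h5 : min 1 ((p - 1) ^ 2) ≤ (p - 1) ^ 2 := min_le_right _ _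
  nlinarith [mul_nonneg (sub_nonneg.2 h4) (sq_nonneg y),
    mul_nonneg (sub_nonneg.2 h5) (sq_nonneg γ)]

/-- The constant in the pointwise gradient bound. -/
noncomputable def bernC (n p a : ℝ) : ℝ :=
  2 / coer n p a * (2 / n * (p - 2) ^ 2 + 8 * (p - 1) ^ 2 / coer n p a
    + (a + 1) ^ 2 / coer n p a + 2 * p + 1)

theorem bernC_pos {n p a : ℝ} (hn : 0 < n) (hp : 1 < p) (ha : 0 < a) : 0 < bernC n p a := by
  have := coer_pos hn hp ha
  unfold bernC
  positivity

theorem sq_le_of_quadratic {n p a y γ θ e κ : ℝ} (hn : 0 < n) (hp : 1 < p) (ha : 0 < a)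
    (hy : 0 ≤ y) (hγ : 0 ≤ γ) (hθ : θ ^ 2 ≤ e) (hκ : 0 ≤ κ)
    (h : 2 / n * (y - (p - 1) * γ + (p - 2) * θ) ^ 2 + 4 * (p - 1) * γ * θ - 2 * p * e
      + 2 * a * y * γ - 2 * (a + 1) * y * θ ≤ κ) :
    γ ^ 2 ≤ bernC n p a * (e + κ) := by
  have hc := coer_pos hn hp ha
  have h1 := coer_le hn hp ha hy hγ
  set c := coer n p a with hcdef
  have he : 0 ≤ e := (sq_nonneg θ).trans hθ
  have h2 : 1 / n * (y - (p - 1) * γ) ^ 2 - 2 / n * (p - 2) ^ 2 * θ ^ 2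
      ≤ 2 / n * (y - (p - 1) * γ + (p - 2) * θ) ^ 2 := by
    have : 0 ≤ 1 / n * (y - (p - 1) * γ + 2 * ((p - 2) * θ)) ^ 2 := by positivity
    have e2 : (2 : ℝ) / n = 2 * (1 / n) := by ring
    rw [e2]
    nlinarith
  have h3 : -(c / 2 * γ ^ 2 + 8 * (p - 1) ^ 2 / c * θ ^ 2) ≤ 4 * (p - 1) * γ * θ := by
    have : 0 ≤ 1 / (2 * c) * (c * γ + 4 * (p - 1) * θ) ^ 2 := by positivity
    have e3 : 1 / (2 * c) * (c * γ + 4 * (p - 1) * θ) ^ 2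
        = c / 2 * γ ^ 2 + 8 * (p - 1) ^ 2 / c * θ ^ 2 + 4 * (p - 1) * γ * θ := by
      field_simp
      ring
    linarith
  have h4 : 2 * (a + 1) * y * θ ≤ c * y ^ 2 + (a + 1) ^ 2 / c * θ ^ 2 := by
    have : 0 ≤ 1 / c * (c * y - (a + 1) * θ) ^ 2 := by positivity
    have e4 : 1 / c * (c * y - (a + 1) * θ) ^ 2
        = c * y ^ 2 + (a + 1) ^ 2 / c * θ ^ 2 - 2 * (a + 1) * y * θ := by
      field_simp
      ring
    linarith
  set S := 2 / n * (p - 2) ^ 2 + 8 * (p - 1) ^ 2 / c + (a + 1) ^ 2 / c with hS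
  have hS0 : 0 ≤ S := by positivity
  have h5 : S * θ ^ 2 ≤ S * e := mul_le_mul_of_nonneg_left hθ hS0
  have h6 : S * θ ^ 2 = 2 / n * (p - 2) ^ 2 * θ ^ 2 + 8 * (p - 1) ^ 2 / c * θ ^ 2
      + (a + 1) ^ 2 / c * θ ^ 2 := by
    rw [hS]
    ring
  have h7 : c / 2 * γ ^ 2 ≤ (S + 2 * p + 1) * (e + κ) := by
    nlinarith [mul_nonneg hS0 hκ, mul_nonneg (by linarith : (0 : ℝ) ≤ p) hκ]
  have h8 : bernC n p a * (e + κ) = 2 / c * ((S + 2 * p + 1) * (e + κ)) := by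
    rw [bernC]
    ring
  rw [h8]
  calc γ ^ 2 = 2 / c * (c / 2 * γ ^ 2) := by field_simp
    _ ≤ _ := mul_le_mul_of_nonneg_left h7 (by positivity)

/-- Combination of the differentiated equation with the conditions at a maximum. -/
theorem bernstein_scalar {n p a Z U R τ δ ε K X P lam ell κ : ℝ} (hn : 0 < n) (hp : 1 < p)
    (ha : 0 < a) (hZ : 0 < Z) (hU : 0 < U) (hR : 0 ≤ R) (hκ : 0 ≤ κ)
    (h0 : Z * τ + (p - 2) * δ = Z * R)
    (h1 : 2 * δ * τ + X + 2 * (p - 2) * ε = (a + 3) * R * δ)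
    (h2 : 2 / Z * (X + (Z * K + (p - 2) * ε)) - 4 / Z ^ 2 * (Z * ε + (p - 2) * δ ^ 2)
      - 2 / U * (Z * R) + 2 / U ^ 2 * ((p - 1) * Z ^ 2) + P ≤ 0)
    (hδ : δ = Z ^ 2 / U - Z * lam / 2)
    (hε : ε = Z ^ 3 / U ^ 2 - Z ^ 2 * lam / U + Z ^ 2 * ell / 4)
    (hK : (τ - Z / U) ^ 2 / n + 2 * δ / U - Z ^ 2 / U ^ 2 ≤ K)
    (hP : -(κ * Z) ≤ P) (hlam : lam ^ 2 ≤ Z * ell) :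
    Z / U ^ 2 ≤ bernC n p a * (ell / 4 + κ) := by
  obtain ⟨m, hm, rfl⟩ : ∃ m : ℝ, 0 < m ∧ Z = m ^ 2 :=
    ⟨√Z, Real.sqrt_pos.2 hZ, (Real.sq_sqrt hZ.le).symm⟩
  obtain ⟨γ, hγ, rfl⟩ : ∃ γ : ℝ, 0 < γ ∧ U = m / γ :=
    ⟨m / U, by positivity, by field_simp⟩
  obtain ⟨y, hy, rfl⟩ : ∃ y : ℝ, 0 ≤ y ∧ R = y * m := ⟨R / m, by positivity, by field_simp⟩
  obtain ⟨θ, rfl⟩ : ∃ θ : ℝ, lam = 2 * m * θ := ⟨lam / (2 * m), by field_simp⟩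
  obtain ⟨e, rfl⟩ : ∃ e : ℝ, ell = 4 * e := ⟨ell / 4, by ring⟩
  have hδ' : δ = m ^ 3 * (γ - θ) := by rw [hδ]; field_simp
  have hε' : ε = m ^ 4 * (γ ^ 2 - 2 * γ * θ + e) := by rw [hε]; field_simp
  have hτ : τ = m * (y - (p - 2) * (γ - θ)) := by
    have : m ^ 2 * τ = m ^ 2 * (m * (y - (p - 2) * (γ - θ))) := by
      rw [hδ'] at h0
      linarith
    exact mul_left_cancel₀ (by positivity) this
  have hX : X = (a + 3) * (y * m) * δ - 2 * δ * τ - 2 * (p - 2) * ε := by linarith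
  have hθ : θ ^ 2 ≤ e := by
    have : m ^ 2 * θ ^ 2 ≤ m ^ 2 * e := by linear_combination hlam / 4
    exact le_of_mul_le_mul_left this (by positivity)
  have hγ2 : m ^ 2 / (m / γ) ^ 2 = γ ^ 2 := by field_simp
  rw [hγ2]
  have hK' : m ^ 2 * (1 / n * (y - (p - 1) * γ + (p - 2) * θ) ^ 2 + 2 * γ * (γ - θ) - γ ^ 2)
      ≤ K := by
    refine le_trans (le_of_eq ?_) hK
    rw [hδ', hτ]
    field_simp
    ring
  have key : 2 / m ^ 2 * (X + (m ^ 2 * K + (p - 2) * ε))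
      - 4 / (m ^ 2) ^ 2 * (m ^ 2 * ε + (p - 2) * δ ^ 2)
      - 2 / (m / γ) * (m ^ 2 * (y * m)) + 2 / (m / γ) ^ 2 * ((p - 1) * (m ^ 2) ^ 2)
      = 2 * K + m ^ 2 * (2 * (a + 1) * y * (γ - θ) - 2 * p * (γ ^ 2 - 2 * γ * θ + e)
        + 2 * (p - 1) * γ ^ 2 - 2 * y * γ) := by
    rw [hX, hδ', hε', hτ]
    field_simp
    ring
  rw [key] at h2
  have h3 : m ^ 2 * (2 / n * (y - (p - 1) * γ + (p - 2) * θ) ^ 2 + 4 * (p - 1) * γ * θ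
      - 2 * p * e + 2 * a * y * γ - 2 * (a + 1) * y * θ) ≤ m ^ 2 * κ := by
    have e2 : (2 : ℝ) / n = 2 * (1 / n) := by ring
    rw [e2]
    linear_combination h2 + hP + 2 * hK'
  have h4 := sq_le_of_quadratic hn hp ha hy hγ.le hθ hκ
    (le_of_mul_le_mul_left h3 (by positivity))
  simpa using h4

end Scalar

section Bernstein

variable {E : Type*} [NormedAddCommGroup E] [InnerProductSpace ℝ E]

theorem hasFDerivAt_norm_sq_comp {G : E → E} {B : E →L[ℝ] E} {x : E} (h : HasFDerivAt G B x) :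
    HasFDerivAt (fun y => ‖G y‖ ^ 2) ((2 : ℝ) • (innerSL ℝ (G x)).comp B) x := by
  refine h.norm_sq.congr_fderiv ?_
  ext v
  simp

theorem hasFDerivAt_norm_rpow_comp {G : E → E} {B : E →L[ℝ] E} {x : E} (h : HasFDerivAt G B x)
    (hg : G x ≠ 0) (s : ℝ) :
    HasFDerivAt (fun y => ‖G y‖ ^ s) ((s * ‖G x‖ ^ (s - 2)) • (innerSL ℝ (G x)).comp B) x := by
  have hn : 0 < ‖G x‖ := norm_pos_iff.2 hg
  have key : ∀ (y : E) (r : ℝ), (‖G y‖ ^ 2) ^ r = ‖G y‖ ^ (2 * r) := fun y r => by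
    rw [← Real.rpow_natCast, ← Real.rpow_mul (norm_nonneg _)]
    norm_num
  have h1 := (hasFDerivAt_norm_sq_comp h).rpow_const (p := s / 2)
    (Or.inl (pow_pos hn 2).ne')
  have h2 : (fun y => ‖G y‖ ^ s) = fun y => (‖G y‖ ^ 2) ^ (s / 2) := by
    funext y
    rw [key]
    congr 1
    ring
  rw [h2]
  refine h1.congr_fderiv ?_
  rw [key, smul_smul]
  congr 1
  rw [show 2 * (s / 2 - 1) = s - 2 by ring]
  ring

theorem pForm_flip (p : ℝ) {T : E →L[ℝ] E →L[ℝ] E} (hT : ∀ v w, T v w = T w v) (g : E) :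
    pForm p g (T.flip g) = pForm p g (T g) := by
  congr 1
  ext v
  simp [hT v g]

variable [FiniteDimensional ℝ E]

/-- Refined Cauchy-Schwarz inequality for the Hessian. -/
theorem hessian_trace_bound {D : E →L[ℝ] E} (hD : ∀ v w, inner ℝ (D v) w = inner ℝ v (D w))
    (g : E) (U : ℝ) (hE : 0 < Module.finrank ℝ E) :
    (LinearMap.trace ℝ E (D : E →ₗ[ℝ] E) - ‖g‖ ^ 2 / U) ^ 2 / Module.finrank ℝ E
      + 2 * inner ℝ g (D g) / U - (‖g‖ ^ 2) ^ 2 / U ^ 2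
      ≤ LinearMap.trace ℝ E ((D.comp D : E →L[ℝ] E) : E →ₗ[ℝ] E) := by
  set b := stdOrthonormalBasis ℝ E
  have hn : (0 : ℝ) < Module.finrank ℝ E := by exact_mod_cast hE
  have hg2 : ∑ i, inner ℝ g (b i) ^ 2 = ‖g‖ ^ 2 := by
    rw [← b.sum_sq_norm_inner_left g]
    simp
  have hδ : ∑ i, inner ℝ g (b i) * inner ℝ (b i) (D g) = inner ℝ g (D g) :=
    b.sum_inner_mul_inner g (D g)
  have hτ : LinearMap.trace ℝ E (D : E →ₗ[ℝ] E) = ∑ i, inner ℝ (b i) (D (b i)) :=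
    LinearMap.trace_eq_sum_inner _ b
  have hK : LinearMap.trace ℝ E ((D.comp D : E →L[ℝ] E) : E →ₗ[ℝ] E) = ∑ i, ‖D (b i)‖ ^ 2 := by
    rw [LinearMap.trace_eq_sum_inner _ b]
    refine Finset.sum_congr rfl fun i _ => ?_
    rw [← real_inner_self_eq_norm_sq, hD]
    rfl
  have hi : ∀ i, (inner ℝ (b i) (D (b i)) - inner ℝ g (b i) ^ 2 / U) ^ 2
      ≤ ‖D (b i)‖ ^ 2 - 2 / U * (inner ℝ g (b i) * inner ℝ (b i) (D g))
        + inner ℝ g (b i) ^ 2 * (‖g‖ ^ 2 / U ^ 2) := fun i => by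
    have h1 := abs_real_inner_le_norm (b i) (D (b i) - (inner ℝ g (b i) / U) • g)
    rw [b.norm_eq_one, one_mul] at h1
    have h2 := pow_le_pow_left₀ (abs_nonneg _) h1 2
    rw [sq_abs, inner_sub_right, inner_smul_right, norm_sub_sq_real, inner_smul_right, norm_smul,
      mul_pow, Real.norm_eq_abs, sq_abs, real_inner_comm g (b i), hD] at h2
    calc _ = _ := by ring
      _ ≤ _ := h2
      _ = _ := by ring
  have hsum := Finset.sum_le_sum fun i (_ : i ∈ Finset.univ) => hi i
  rw [Finset.sum_add_distrib, Finset.sum_sub_distrib, ← Finset.mul_sum, ← Finset.sum_mul, hδ, hg2,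
    ← hK] at hsum
  have hcs := sq_sum_le_card_mul_sum_sq (s := Finset.univ)
    (f := fun i => inner ℝ (b i) (D (b i)) - inner ℝ g (b i) ^ 2 / U)
  rw [Finset.sum_sub_distrib, ← hτ, ← Finset.sum_div, hg2, Finset.card_univ, Fintype.card_fin]
    at hcs
  have h3 : (LinearMap.trace ℝ E (D : E →ₗ[ℝ] E) - ‖g‖ ^ 2 / U) ^ 2 / Module.finrank ℝ E
      ≤ ∑ i, (inner ℝ (b i) (D (b i)) - inner ℝ g (b i) ^ 2 / U) ^ 2 := by
    rw [div_le_iff₀ hn]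
    linarith
  have h4 : (‖g‖ ^ 2) ^ 2 / U ^ 2 = ‖g‖ ^ 2 * (‖g‖ ^ 2 / U ^ 2) := by ring
  have h5 : 2 * inner ℝ g (D g) / U = 2 / U * inner ℝ g (D g) := by ring
  linarith

/-- The equation `pForm p ∇u D²u = |∇u|^s`, differentiated in the direction of the gradient. -/
theorem pForm_equation_deriv {p s : ℝ} {G : E → E} {D : E → E →L[ℝ] E}
    {T : E →L[ℝ] E →L[ℝ] E} {x : E} (hG : HasFDerivAt G (D x) x) (hD : HasFDerivAt D T x)
    (hsym : ∀ v w, inner ℝ (D x v) w = inner ℝ v (D x w))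
    (heq : ∀ᶠ y in 𝓝 x, pForm p (G y) (D y) = ‖G y‖ ^ s) (hg : G x ≠ 0) :
    2 * inner ℝ (G x) (D x (G x)) * LinearMap.trace ℝ E (D x : E →ₗ[ℝ] E)
      + pForm p (G x) (T (G x)) + 2 * (p - 2) * ‖D x (G x)‖ ^ 2
      = s * ‖G x‖ ^ (s - 2) * inner ℝ (G x) (D x (G x)) := by
  set g := G x with hgdef
  have hline : HasDerivAt (fun t : ℝ => x + t • g) g 0 := by
    simpa using ((hasDerivAt_id (0 : ℝ)).smul_const g).const_add x
  have htend : Tendsto (fun t : ℝ => x + t • g) (𝓝 0) (𝓝 x) := by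
    simpa using hline.continuousAt.tendsto
  have h00 : x + (0 : ℝ) • g = x := by simp
  have lift : ∀ {L : E →L[ℝ] ℝ} {f : E → ℝ}, HasFDerivAt f L x →
      HasDerivAt (fun t : ℝ => f (x + t • g)) (L g) 0 := by
    intro L f h
    rw [← h00] at h
    exact h.comp_hasDerivAt 0 hline
  have h1 := lift (hasFDerivAt_norm_sq_comp hG)
  have h2 := lift (hasFDerivAt_norm_rpow_comp hG hg s)
  have hGl : HasDerivAt (fun t : ℝ => G (x + t • g)) (D x g) 0 := by
    have h : HasFDerivAt G (D x) (x + (0 : ℝ) • g) := by rwa [h00]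
    exact h.comp_hasDerivAt 0 hline
  have hDl : HasDerivAt (fun t : ℝ => D (x + t • g)) (T g) 0 := by
    have h : HasFDerivAt D T (x + (0 : ℝ) • g) := by rwa [h00]
    exact h.comp_hasDerivAt 0 hline
  let tr : (E →L[ℝ] E) →L[ℝ] ℝ := LinearMap.toContinuousLinearMap
    ((LinearMap.trace ℝ E).comp (ContinuousLinearMap.coeLM ℝ))
  have htr : HasDerivAt (fun t : ℝ => tr (D (x + t • g))) (tr (T g)) 0 :=
    tr.hasFDerivAt.comp_hasDerivAt 0 hDl
  have h3 := (h1.mul htr).add ((hGl.inner ℝ (hDl.clm_apply hGl)).const_mul (p - 2))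
  have h4 : (fun t : ℝ => ‖G (x + t • g)‖ ^ 2 * tr (D (x + t • g))
      + (p - 2) * inner ℝ (G (x + t • g)) (D (x + t • g) (G (x + t • g)))) =ᶠ[𝓝 0]
      fun t => ‖G (x + t • g)‖ ^ s := htend.eventually heq
  have h5 := (h2.congr_of_eventuallyEq h4).unique h3
  simp only [h00, ← hgdef] at h5
  have e1 : inner ℝ g (D x (D x g)) = ‖D x g‖ ^ 2 := by
    rw [← hsym, real_inner_self_eq_norm_sq]
  have e2 : inner ℝ (D x g) (D x g) = ‖D x g‖ ^ 2 := real_inner_self_eq_norm_sq _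
  have e3 : ∀ A : E →L[ℝ] E, tr A = LinearMap.trace ℝ E (A : E →ₗ[ℝ] E) := fun A => rfl
  simp only [inner_add_right, e1, e2, e3, smul_apply,
    ContinuousLinearMap.comp_apply, innerSL_apply_apply, smul_eq_mul] at h5
  rw [pForm]
  linarith

end Bernstein

section BernsteinPoint

variable {E : Type*} [NormedAddCommGroup E] [InnerProductSpace ℝ E] [FiniteDimensional ℝ E]

/-- The gradient and Hessian of `log |G|² - 2 log u + L` when `G = ∇u`. -/
theorem hasHess_log_quotient {u L : E → ℝ} {G : E → E} {D : E → E →L[ℝ] E}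
    {T : E →L[ℝ] E →L[ℝ] E} {x l : E} {BL : E →L[ℝ] E}
    (hu : ∀ᶠ y in 𝓝 x, HasGradientAt u (G y) y) (hG : ∀ᶠ y in 𝓝 x, HasFDerivAt G (D y) y)
    (hD : HasFDerivAt D T x) (hsym : ∀ᶠ y in 𝓝 x, ∀ v w, inner ℝ (D y v) w = inner ℝ v (D y w))
    (hL : HasHess L x l BL) (hux : 0 < u x) (hg : G x ≠ 0) :
    HasHess (fun y => Real.log (‖G y‖ ^ 2) - 2 * Real.log (u y) + L y) x
      ((2 / ‖G x‖ ^ 2) • D x (G x) - (2 / u x) • G x + l)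
      ((2 / ‖G x‖ ^ 2) • (T.flip (G x) + (D x).comp (D x))
        - (4 / (‖G x‖ ^ 2) ^ 2) • rankOne (D x (G x))
        - (2 / u x) • D x + (2 / u x ^ 2) • rankOne (G x) + BL) := by
  refine HasHess.add ?_ hL
  have hGx := hG.self_of_nhds
  have hux' : HasFDerivAt u (innerSL ℝ (G x)) x := hasGradientAt_iff_innerSL.1 hu.self_of_nhds
  have hZ0 : ‖G x‖ ^ 2 ≠ 0 := by simpa using hg
  refine ⟨fun y => (2 / ‖G y‖ ^ 2) • D y (G y) - (2 / u y) • G y, ?_, rfl, ?_⟩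
  · have hgn : ∀ᶠ y in 𝓝 x, G y ≠ 0 := hGx.continuousAt.eventually_ne hg
    have hun : ∀ᶠ y in 𝓝 x, 0 < u y := hux'.continuousAt.eventually_const_lt hux
    filter_upwards [hu, hG, hsym, hgn, hun] with y h1 h2 h3 h4 h5
    have hZ : ‖G y‖ ^ 2 ≠ 0 := by simpa using h4
    have k1 := (hasFDerivAt_norm_sq_comp h2).log hZ
    have k2 := ((hasGradientAt_iff_innerSL.1 h1).log h5.ne').const_mul 2
    refine hasGradientAt_of_hasFDerivAt (k1.sub k2) fun v => ?_
    simp only [sub_apply, smul_apply, ContinuousLinearMap.comp_apply, innerSL_apply_apply,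
      smul_eq_mul, inner_sub_left, real_inner_smul_left, h3]
    ring
  · have hdiv : ∀ t : ℝ, t ≠ 0 → HasDerivAt (fun t : ℝ => 2 / t) (-2 / t ^ 2) t := fun t ht => by
      simpa using (hasDerivAt_const t (2 : ℝ)).fun_div (hasDerivAt_id t) ht
    have k1 := (hasFDerivAt_norm_sq_comp hGx)
    have k2 := ((hdiv _ hZ0).comp_hasFDerivAt x k1).smul (hD.clm_apply hGx)
    have k3 := ((hdiv _ hux.ne').comp_hasFDerivAt x hux').smul hGx
    refine (k2.sub k3).congr_fderiv ?_
    ext v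
    have hs : inner ℝ (G x) (D x v) = inner ℝ (D x (G x)) v :=
      (hsym.self_of_nhds _ _).symm
    simp only [sub_apply, add_apply, smul_apply, ContinuousLinearMap.comp_apply,
      ContinuousLinearMap.smulRight_apply, ContinuousLinearMap.flip_apply, innerSL_apply_apply,
      smul_eq_mul, rankOne_apply, hs, Function.comp_apply]
    module

/-- Pointwise Bernstein estimate at a maximum of `|∇u|² u⁻² e^L`. -/
theorem bernstein_point {p a κ : ℝ} {u L : E → ℝ} {G : E → E} {D : E → E →L[ℝ] E}
    {T : E →L[ℝ] E →L[ℝ] E} {x l : E} {BL : E →L[ℝ] E} (hp : 1 < p) (ha : 0 < a) (hκ : 0 ≤ κ)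
    (hu : ∀ᶠ y in 𝓝 x, HasGradientAt u (G y) y) (hG : ∀ᶠ y in 𝓝 x, HasFDerivAt G (D y) y)
    (hD : HasFDerivAt D T x) (hsym : ∀ᶠ y in 𝓝 x, ∀ v w, inner ℝ (D y v) w = inner ℝ v (D y w))
    (hT : ∀ v w, T v w = T w v)
    (heq : ∀ᶠ y in 𝓝 x, pForm p (G y) (D y) = ‖G y‖ ^ (a + 3))
    (hL : HasHess L x l BL) (hux : 0 < u x) (hg : G x ≠ 0)
    (hmax : IsLocalMax (fun y => Real.log (‖G y‖ ^ 2) - 2 * Real.log (u y) + L y) x)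
    (hBL : -(κ * ‖G x‖ ^ 2) ≤ pForm p (G x) BL) :
    ‖G x‖ ^ 2 / u x ^ 2 ≤ bernC (Module.finrank ℝ E) p a * (‖l‖ ^ 2 / 4 + κ) := by
  have hsx := hsym.self_of_nhds
  obtain ⟨m1, m2⟩ := (hasHess_log_quotient hu hG hD hsym hL hux hg).of_isLocalMax hmax
  have hform := pForm_nonpos hp.le m2 (G x)
  have hder := pForm_equation_deriv hG.self_of_nhds hD hsx heq hg
  have heqx := heq.self_of_nhds
  have hE : 0 < Module.finrank ℝ E := by
    have : Nontrivial E := ⟨G x, 0, hg⟩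
    exact Module.finrank_pos
  have hK := hessian_trace_bound hsx (G x) (u x) hE
  have hn : (0 : ℝ) < Module.finrank ℝ E := by exact_mod_cast hE
  set g := G x with hgdef
  set D₀ := D x with hD₀
  set U := u x
  have hgn : 0 < ‖g‖ := norm_pos_iff.2 hg
  have hZ : 0 < ‖g‖ ^ 2 := by positivity
  have hpow : ‖g‖ ^ (a + 3) = ‖g‖ ^ 2 * ‖g‖ ^ (a + 1) := by
    rw [← Real.rpow_natCast, ← Real.rpow_add hgn]
    congr 1
    push_cast
    ring
  have hDD : inner ℝ g (D₀ (D₀ g)) = ‖D₀ g‖ ^ 2 := by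
    rw [← hsx, real_inner_self_eq_norm_sq]
  have hDg : D₀ g = (‖g‖ ^ 2 / U) • g - (‖g‖ ^ 2 / 2) • l := by
    have h1 : (2 / ‖g‖ ^ 2) • D₀ g = (2 / U) • g - l := by
      rw [eq_sub_iff_add_eq, ← sub_eq_zero, ← m1]
      abel
    have h2 : D₀ g = (‖g‖ ^ 2 / 2) • ((2 / ‖g‖ ^ 2) • D₀ g) := by
      rw [smul_smul]
      field_simp
      simp
    rw [h2, h1, smul_sub, smul_smul]
    congr 2
    field_simp
  refine bernstein_scalar (R := ‖g‖ ^ (a + 1)) (τ := LinearMap.trace ℝ E (D₀ : E →ₗ[ℝ] E))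
    (δ := inner ℝ g (D₀ g)) (ε := ‖D₀ g‖ ^ 2)
    (K := LinearMap.trace ℝ E ((D₀.comp D₀ : E →L[ℝ] E) : E →ₗ[ℝ] E))
    (X := pForm p g (T g)) (P := pForm p g BL) (lam := inner ℝ g l)
    hn hp ha hZ hux (by positivity) hκ ?_ ?_ ?_ ?_ ?_ hK hBL ?_
  · rw [← hpow, ← heqx, pForm]
  · rw [hder, show a + 3 - 2 = a + 1 by ring]
  · have hDDf : pForm p g (D₀.comp D₀)
        = ‖g‖ ^ 2 * LinearMap.trace ℝ E ((D₀.comp D₀ : E →L[ℝ] E) : E →ₗ[ℝ] E)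
          + (p - 2) * ‖D₀ g‖ ^ 2 := by
      rw [pForm, ContinuousLinearMap.comp_apply, hDD]
    simp only [pForm_add, pForm_sub, pForm_smul, pForm_flip p hT, pForm_rankOne, hDDf, heqx, hpow,
      real_inner_self_eq_norm_sq] at hform
    refine le_trans (le_of_eq ?_) hform
    ring
  · rw [hDg, inner_sub_right, inner_smul_right, inner_smul_right, real_inner_self_eq_norm_sq]
    ring
  · rw [hDg, norm_sub_sq_real, norm_smul, norm_smul, inner_smul_left, inner_smul_right, mul_pow,
      mul_pow, Real.norm_eq_abs, Real.norm_eq_abs, sq_abs, sq_abs]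
    simp only [conj_trivial]
    ring
  · have := abs_real_inner_le_norm g l
    rw [← mul_pow]
    exact sq_le_sq' (by linarith [neg_abs_le (inner ℝ g l)]) ((le_abs_self _).trans this)

end BernsteinPoint

section SmoothPoint

variable {E : Type*} [NormedAddCommGroup E] [InnerProductSpace ℝ E] [CompleteSpace E]

/-- The Riesz isomorphism of a real Hilbert space, as a linear map. -/
noncomputable def rieszMap (E : Type*) [NormedAddCommGroup E] [InnerProductSpace ℝ E]
    [CompleteSpace E] : (E →L[ℝ] ℝ) →L[ℝ] E where
  toFun := (InnerProductSpace.toDual ℝ E).symm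
  map_add' := map_add _
  map_smul' := by simp
  cont := (InnerProductSpace.toDual ℝ E).symm.continuous

theorem inner_rieszMap (f : E →L[ℝ] ℝ) (v : E) : inner ℝ (rieszMap E f) v = f v :=
  InnerProductSpace.toDual_symm_apply

theorem inner_fderiv_gradient {u : E → ℝ} {x : E} (h : DifferentiableAt ℝ (fderiv ℝ u) x)
    (v w : E) :
    inner ℝ (fderiv ℝ (gradient u) x v) w = fderiv ℝ (fderiv ℝ u) x v w := by
  have h1 : HasFDerivAt (gradient u) ((rieszMap E).comp (fderiv ℝ (fderiv ℝ u) x)) x :=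
    (rieszMap E).hasFDerivAt.comp x h.hasFDerivAt
  rw [h1.fderiv, ContinuousLinearMap.comp_apply, inner_rieszMap]

theorem ContDiffAt.contDiffAt_gradient {u : E → ℝ} {x : E} (h : ContDiffAt ℝ 3 u x) :
    ContDiffAt ℝ 2 (gradient u) x := by
  have h1 : ContDiffAt ℝ 2 (fderiv ℝ u) x := h.fderiv_right (by norm_num)
  exact (rieszMap E).contDiff.contDiffAt.comp x h1

theorem inner_fderiv_gradient_symm {u : E → ℝ} {x : E} (h : ContDiffAt ℝ 3 u x) (v w : E) :
    inner ℝ (fderiv ℝ (gradient u) x v) w = inner ℝ v (fderiv ℝ (gradient u) x w) := by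
  have h1 : DifferentiableAt ℝ (fderiv ℝ u) x :=
    (h.fderiv_right (m := 2) (by norm_num)).differentiableAt (by norm_num)
  rw [inner_fderiv_gradient h1, real_inner_comm, inner_fderiv_gradient h1]
  exact (h.isSymmSndFDerivAt (by simp; norm_num)).eq v w

theorem fderiv_fderiv_gradient_symm {u : E → ℝ} {x : E} (h : ContDiffAt ℝ 3 u x) (v w : E) :
    fderiv ℝ (fderiv ℝ (gradient u)) x v w =
      fderiv ℝ (fderiv ℝ (gradient u)) x w v :=
  (h.contDiffAt_gradient.isSymmSndFDerivAt (by simp)).eq v w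

end SmoothPoint

section StrongSolution

variable {N : ℕ} {p q : ℝ} {G : Set (EuclideanSpace ℝ (Fin N))}
  {u : EuclideanSpace ℝ (Fin N) → ℝ}

theorem IsStrongSolution.hasGradientAt (hu : IsStrongSolution p q G u) (hG : IsOpen G)
    {x : EuclideanSpace ℝ (Fin N)} (hx : x ∈ G) : HasGradientAt u (gradient u x) x :=
  ((hu.1.contDiffAt (hG.mem_nhds hx)).differentiableAt (by norm_num)).hasGradientAt

theorem IsStrongSolution.continuousOn_gradient (hu : IsStrongSolution p q G u) (hG : IsOpen G) :
    ContinuousOn (gradient u) G :=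
  (rieszMap _).continuous.comp_continuousOn
    (hu.1.continuousOn_fderiv_of_isOpen hG (by norm_num))

theorem IsStrongSolution.eventually_regular (hu : IsStrongSolution p q G u) (hG : IsOpen G)
    {x : EuclideanSpace ℝ (Fin N)} (hx : x ∈ G) (hg : gradient u x ≠ 0) :
    ∀ᶠ y in 𝓝 x, y ∈ G ∧ gradient u y ≠ 0 ∧ ContDiffAt ℝ 3 u y := by
  have hV : IsOpen {x | x ∈ G ∧ gradient u x ≠ 0} :=
    (hu.continuousOn_gradient hG).isOpen_inter_preimage hG isOpen_compl_singleton
  filter_upwards [hV.mem_nhds ⟨hx, hg⟩] with y hy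
  exact ⟨hy.1, hy.2, hu.2.1.contDiffAt (hV.mem_nhds hy)⟩

theorem fderiv_pGradField {y : EuclideanSpace ℝ (Fin N)} (hg : gradient u y ≠ 0)
    (h : ContDiffAt ℝ 3 u y) :
    HasFDerivAt (pGradField p u) (‖gradient u y‖ ^ (p - 2) • fderiv ℝ (gradient u) y +
      (((p - 2) * ‖gradient u y‖ ^ (p - 2 - 2)) •
        (innerSL ℝ (gradient u y)).comp (fderiv ℝ (gradient u) y)).smulRight (gradient u y)) y := by
  have hD : HasFDerivAt (gradient u) (fderiv ℝ (gradient u) y) y :=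
    (h.contDiffAt_gradient.differentiableAt (by norm_num)).hasFDerivAt
  exact (hasFDerivAt_norm_rpow_comp hD hg (p - 2)).smul hD

theorem IsStrongSolution.pForm_eq (hu : IsStrongSolution p q G u)
    {y : EuclideanSpace ℝ (Fin N)} (hy : y ∈ G) (hg : gradient u y ≠ 0)
    (h : ContDiffAt ℝ 3 u y) :
    pForm p (gradient u y) (fderiv ℝ (gradient u) y) = ‖gradient u y‖ ^ (q - p + 1 + 3) := by
  have h1 := (hu.2.2 y hy).2
  have hgn : 0 < ‖gradient u y‖ := norm_pos_iff.2 hg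
  set g := gradient u y
  set D := fderiv ℝ (gradient u) y
  have htr : ∀ (f : EuclideanSpace ℝ (Fin N) →L[ℝ] ℝ) (v : EuclideanSpace ℝ (Fin N)),
      LinearMap.trace ℝ _ ((f.smulRight v : EuclideanSpace ℝ (Fin N) →L[ℝ] _) :
        EuclideanSpace ℝ (Fin N) →ₗ[ℝ] EuclideanSpace ℝ (Fin N)) = f v := by
    intro f v
    exact LinearMap.trace_smulRight (f : _ →ₗ[ℝ] ℝ) v
  rw [(fderiv_pGradField (p := p) hg h).fderiv, ContinuousLinearMap.toLinearMap_add, map_add, htr,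
    ContinuousLinearMap.toLinearMap_smul, map_smul] at h1
  simp only [smul_apply, ContinuousLinearMap.comp_apply, innerSL_apply_apply, smul_eq_mul] at h1
  have e1 : ‖g‖ ^ (p - 2) = ‖g‖ ^ (p - 2 - 2) * ‖g‖ ^ 2 := by
    rw [← Real.rpow_natCast, ← Real.rpow_add hgn]
    congr 1
    push_cast
    ring
  have e2 : ‖g‖ ^ q = ‖g‖ ^ (p - 2 - 2) * ‖g‖ ^ (q - p + 1 + 3) := by
    rw [← Real.rpow_add hgn]
    congr 1
    ring
  have hpos : ‖g‖ ^ (p - 2 - 2) ≠ 0 := by positivity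
  apply mul_left_cancel₀ hpos
  rw [← e2, ← h1, e1, pForm]
  ring

theorem IsStrongSolution.hasHess (hu : IsStrongSolution p q G u) (hG : IsOpen G)
    {x : EuclideanSpace ℝ (Fin N)} (hx : x ∈ G) (hg : gradient u x ≠ 0) :
    HasHess u x (gradient u x) (fderiv ℝ (gradient u) x) := by
  have h := (hu.eventually_regular hG hx hg)
  refine ⟨gradient u, ?_, rfl, ?_⟩
  · filter_upwards [h] with y hy using hu.hasGradientAt hG hy.1
  · exact (h.self_of_nhds.2.2.contDiffAt_gradient.differentiableAt (by norm_num)).hasFDerivAt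

theorem HasHess.hasGradientAt {E : Type*} [NormedAddCommGroup E] [InnerProductSpace ℝ E]
    [CompleteSpace E] {f : E → ℝ} {x g : E} {B : E →L[ℝ] E}
    (h : HasHess f x g B) : HasGradientAt f g x := by
  obtain ⟨K, h1, rfl, -⟩ := h
  exact h1.self_of_nhds

theorem IsStrongSolution.touch (hu : IsStrongSolution p q G u) (hG : IsOpen G) (hp : 1 < p)
    {x g : EuclideanSpace ℝ (Fin N)} (hx : x ∈ G) (hg : g ≠ 0)
    {ψ : EuclideanSpace ℝ (Fin N) → ℝ}
    {B : EuclideanSpace ℝ (Fin N) →L[ℝ] EuclideanSpace ℝ (Fin N)} (hψ : HasHess ψ x g B)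
    (hmax : IsLocalMax (fun y => u y - ψ y) x) : 0 ≤ pForm p g B := by
  have hgr : gradient u x = g := by
    have h1 := (hasGradientAt_iff_innerSL.1 (hu.hasGradientAt hG hx)).sub
      (hasGradientAt_iff_innerSL.1 hψ.hasGradientAt)
    have h2 := hmax.hasFDerivAt_eq_zero h1
    rw [← map_sub, ← map_zero (innerSL ℝ)] at h2
    exact sub_eq_zero.1 (innerSL_inj.1 h2)
  subst hgr
  obtain ⟨-, h2⟩ := ((hu.hasHess hG hx hg).sub hψ).of_isLocalMax hmax
  have h3 := pForm_nonpos hp.le h2 (gradient u x)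
  rw [pForm_sub, hu.pForm_eq hx hg (hu.eventually_regular hG hx hg).self_of_nhds.2.2] at h3
  have : 0 ≤ ‖gradient u x‖ ^ (q - p + 1 + 3) := by positivity
  linarith

end StrongSolution

section GradientEstimate

/-- The constant in the interior gradient estimate. -/
noncomputable def gradC (n p a : ℝ) : ℝ :=
  √(bernC n p a * (4 + (4 * (n + p - 2) + 8 * (1 + |p - 2|))))

variable {N : ℕ} {p q : ℝ} {G : Set (EuclideanSpace ℝ (Fin N))}
  {u : EuclideanSpace ℝ (Fin N) → ℝ}

theorem IsStrongSolution.norm_gradient_le (hu : IsStrongSolution p q G u) (hG : IsOpen G)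
    (hN : 1 ≤ N) (hp : 1 < p) (hq : p - 1 < q) (hpos : ∀ x ∈ G, 0 ≤ u x)
    {c : EuclideanSpace ℝ (Fin N)} {R : ℝ} (hR : 0 < R) (hball : closedBall c R ⊆ G) :
    ‖gradient u c‖ ≤ gradC N p (q - p + 1) * (u c + 1) / R := by
  have hNr : (1 : ℝ) ≤ N := by exact_mod_cast hN
  have hcG : c ∈ G := hball (mem_closedBall_self hR.le)
  have huc := hpos c hcG
  by_cases hgc : gradient u c = 0
  · rw [hgc, norm_zero]
    exact div_nonneg (mul_nonneg (Real.sqrt_nonneg _) (by linarith)) hR.le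
  have hgcn : 0 < ‖gradient u c‖ := norm_pos_iff.2 hgc
  set Φ : EuclideanSpace ℝ (Fin N) → ℝ :=
    fun y => (R ^ 2 - ‖y - c‖ ^ 2) ^ 2 * (‖gradient u y‖ ^ 2 / (u y + 1) ^ 2) with hΦ
  have hcont : ContinuousOn Φ (closedBall c R) := by
    have h1 := (hu.continuousOn_gradient hG).mono hball
    have h2 := hu.1.continuousOn.mono hball
    refine ContinuousOn.mul (by fun_prop) ((h1.norm.pow 2).div ((h2.add continuousOn_const).pow 2) ?_)
    intro y hy
    have := hpos y (hball hy)
    positivity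
  obtain ⟨x, hx, hmax⟩ := (isCompact_closedBall c R).exists_isMaxOn
    ⟨c, mem_closedBall_self hR.le⟩ hcont
  have hΦc : Φ c = R ^ 4 * (‖gradient u c‖ ^ 2 / (u c + 1) ^ 2) := by
    simp only [hΦ, sub_self, norm_zero]
    ring
  have hΦcx : Φ c ≤ Φ x := hmax (mem_closedBall_self hR.le)
  have hΦx : 0 < Φ x := by
    refine lt_of_lt_of_le ?_ hΦcx
    rw [hΦc]
    positivity
  have hgx : gradient u x ≠ 0 := by
    intro h
    simp [hΦ, h] at hΦx
  have hxG := hball hx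
  have hxR : ‖x - c‖ ≤ R := by simpa [dist_eq_norm] using hx
  have hxlt : ‖x - c‖ < R := by
    refine lt_of_le_of_ne hxR fun h => ?_
    simp [hΦ, h] at hΦx
  set t := ‖x - c‖ ^ 2 with ht
  have ht0 : 0 ≤ t := by positivity
  have htR : t < R ^ 2 := by
    rw [ht]
    gcongr
  set d := R ^ 2 - t with hd
  have hd0 : 0 < d := by linarith
  set K : ℝ := 4 * (N + p - 2) + 8 * (1 + |p - 2|) with hK
  have hK0 : 0 ≤ K := by
    have := abs_nonneg (p - 2)
    rw [hK]
    nlinarith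
  have hreg := hu.eventually_regular hG hxG hgx
  have hux1 : 0 < u x + 1 := by linarith [hpos x hxG]
  have hF : ∀ s : ℝ, s < R ^ 2 →
      HasDerivAt (fun s => 2 * Real.log (R ^ 2 - s)) (-2 / (R ^ 2 - s)) s := by
    intro s hs
    have h1 : R ^ 2 - s ≠ 0 := by linarith
    refine ((((hasDerivAt_id s).const_sub (R ^ 2)).log h1).const_mul 2).congr_deriv ?_
    simp only [id]
    ring
  have hF' : HasDerivAt (fun s => -2 / (R ^ 2 - s)) (-2 / d ^ 2) t := by
    have h1 : R ^ 2 - t ≠ 0 := hd0.ne'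
    refine ((hasDerivAt_const t (-2 : ℝ)).fun_div
      ((hasDerivAt_id t).const_sub (R ^ 2)) h1).congr_deriv ?_
    simp only [id, hd]
    ring
  have hL := hasHess_radial (x := x) (c := c)
    (((eventually_lt_nhds htR).mono fun s hs => hF s hs)) hF'
  have key := bernstein_point (p := p) (a := q - p + 1) (κ := K * R ^ 2 / d ^ 2)
    (u := fun y => u y + 1) (G := gradient u) (D := fderiv ℝ (gradient u))
    (T := fderiv ℝ (fderiv ℝ (gradient u)) x) hp (by linarith) (by positivity)
    (hreg.mono fun y hy => hasGradientAt_iff_innerSL.2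
      ((hasGradientAt_iff_innerSL.1 (hu.hasGradientAt hG hy.1)).add_const 1))
    (hreg.mono fun y hy =>
      (hy.2.2.contDiffAt_gradient.differentiableAt (by norm_num)).hasFDerivAt)
    (((hreg.self_of_nhds.2.2.contDiffAt_gradient.fderiv_right (m := 1)
      (by norm_num)).differentiableAt (by norm_num)).hasFDerivAt)
    (hreg.mono fun y hy => inner_fderiv_gradient_symm hy.2.2)
    (fderiv_fderiv_gradient_symm hreg.self_of_nhds.2.2)
    (hreg.mono fun y hy => hu.pForm_eq hy.1 hy.2.1 hy.2.2) hL hux1 hgx ?_ ?_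
  · have hl : ‖(2 * (-2 / d)) • (x - c)‖ ^ 2 = 16 * t / d ^ 2 := by
      rw [norm_smul, mul_pow, Real.norm_eq_abs, sq_abs, ← ht]
      ring_nf
    rw [finrank_euclideanSpace_fin, ← hd, hl] at key
    have hb : 0 < bernC N p (q - p + 1) := bernC_pos (by linarith) hp (by linarith)
    have h2 : Φ x ≤ bernC N p (q - p + 1) * (4 + K) * R ^ 2 := by
      calc Φ x = d ^ 2 * (‖gradient u x‖ ^ 2 / (u x + 1) ^ 2) := rfl
        _ ≤ d ^ 2 * (bernC N p (q - p + 1) * (16 * t / d ^ 2 / 4 + K * R ^ 2 / d ^ 2)) := by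
          gcongr
        _ = bernC N p (q - p + 1) * (4 * t + K * R ^ 2) := by
          field_simp
          ring
        _ ≤ bernC N p (q - p + 1) * (4 * R ^ 2 + K * R ^ 2) := by gcongr
        _ = _ := by ring
    rw [hΦc] at hΦcx
    have h3 : ‖gradient u c‖ ^ 2 ≤ bernC N p (q - p + 1) * (4 + K) * ((u c + 1) / R) ^ 2 := by
      have h4 := hΦcx.trans h2
      have h5 : R ^ 4 * (‖gradient u c‖ ^ 2 / (u c + 1) ^ 2) =
        ‖gradient u c‖ ^ 2 * (R ^ 4 / (u c + 1) ^ 2) := by ring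
      rw [h5, ← le_div_iff₀ (by positivity)] at h4
      refine h4.trans (le_of_eq ?_)
      field_simp
    have h6 := Real.le_sqrt_of_sq_le h3
    rw [Real.sqrt_mul (by positivity), Real.sqrt_sq (by positivity)] at h6
    rw [gradC, mul_div_assoc]
    exact h6
  · have hlt : ∀ᶠ y in 𝓝 x, y ∈ ball c R := isOpen_ball.mem_nhds (by simpa [dist_eq_norm] using hxlt)
    have hlog : ∀ y ∈ ball c R, y ∈ G → gradient u y ≠ 0 →
        Real.log (‖gradient u y‖ ^ 2) - 2 * Real.log (u y + 1)
          + 2 * Real.log (R ^ 2 - ‖y - c‖ ^ 2) = Real.log (Φ y) := by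
      intro y hy hyG hgy
      have h1 : 0 < u y + 1 := by linarith [hpos y hyG]
      have h2 : 0 < ‖gradient u y‖ := norm_pos_iff.2 hgy
      have h3 : ‖y - c‖ < R := by simpa [dist_eq_norm] using hy
      have h4 : 0 < R ^ 2 - ‖y - c‖ ^ 2 := by
        have : ‖y - c‖ ^ 2 < R ^ 2 := by gcongr
        linarith
      rw [hΦ, Real.log_mul (by positivity) (by positivity),
        Real.log_div (by positivity) (by positivity), Real.log_pow, Real.log_pow (n := 2) (x := u y + 1), 
        Real.log_pow (n := 2) (x := R ^ 2 - ‖y - c‖ ^ 2)]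
      push_cast
      ring
    filter_upwards [hreg, hlt] with y hy hyb
    rw [hlog y hyb hy.1 hy.2.1, hlog x hlt.self_of_nhds hxG hgx]
    refine Real.log_le_log ?_ (hmax (ball_subset_closedBall hyb))
    have h1 : 0 < u y + 1 := by linarith [hpos y hy.1]
    have h2 : 0 < ‖gradient u y‖ := norm_pos_iff.2 hy.2.1
    have h3 : ‖y - c‖ < R := by simpa [dist_eq_norm] using hyb
    have h4 : 0 < R ^ 2 - ‖y - c‖ ^ 2 := by
      have : ‖y - c‖ ^ 2 < R ^ 2 := by gcongr
      linarith
    positivity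
  · rw [pForm_add, pForm_smul, pForm_smul, pForm_id, pForm_rankOne, finrank_euclideanSpace_fin,
      ← ht, ← hd]
    set g := gradient u x
    have hin : inner ℝ g (x - c) ^ 2 ≤ ‖g‖ ^ 2 * t := by
      rw [ht, ← mul_pow, sq_le_sq, abs_of_nonneg (by positivity : 0 ≤ ‖g‖ * ‖x - c‖)]
      exact abs_real_inner_le_norm _ _
    have h1 : (p - 2) * inner ℝ g (x - c) ^ 2 ≤ |p - 2| * (‖g‖ ^ 2 * R ^ 2) := by
      refine (mul_le_mul_of_nonneg_right (le_abs_self _) (sq_nonneg _)).trans ?_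
      refine mul_le_mul_of_nonneg_left (hin.trans ?_) (abs_nonneg _)
      gcongr
    have h2 : d ≤ R ^ 2 := by linarith
    have h3 : 0 ≤ (N + p - 2) * ‖g‖ ^ 2 := mul_nonneg (by linarith) (by positivity)
    have h4 : ‖g‖ ^ 2 * t ≤ ‖g‖ ^ 2 * R ^ 2 := by gcongr
    have e : 2 * (-2 / d) * ((N + p - 2) * ‖g‖ ^ 2) + 4 * (-2 / d ^ 2) *
        (‖g‖ ^ 2 * t + (p - 2) * inner ℝ g (x - c) ^ 2) =
        -((4 * d * ((N + p - 2) * ‖g‖ ^ 2) + 8 * (‖g‖ ^ 2 * t + (p - 2) * inner ℝ g (x - c) ^ 2))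
          / d ^ 2) := by
      field_simp
      ring
    rw [e, neg_le_neg_iff, div_mul_eq_mul_div, hK]
    gcongr
    nlinarith [mul_le_mul_of_nonneg_right h2 h3]

end GradientEstimate

section LogHarnack

theorem exists_orthogonal_norm_eq {N : ℕ} (hN : 2 ≤ N) (a : EuclideanSpace ℝ (Fin N)) :
    ∃ c : EuclideanSpace ℝ (Fin N), inner ℝ a c = 0 ∧ ‖c‖ = ‖a‖ := by
  by_cases ha : a = 0
  · exact ⟨0, by simp, by simp [ha]⟩
  obtain ⟨n, rfl⟩ : ∃ n, N = n + 2 := ⟨N - 2, by omega⟩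
  obtain ⟨b, hb⟩ := exists_orthonormalBasis_zero (E := EuclideanSpace ℝ (Fin (n + 2)))
    (n := n + 1) (by simp) ha
  refine ⟨‖a‖ • b 1, ?_, ?_⟩
  · have h1 : inner ℝ (‖a‖ • b 0) (‖a‖ • b 1) = 0 := by
      rw [inner_smul_left, inner_smul_right, b.inner_eq_zero (by simp)]
      simp
    rwa [← hb] at h1
  · rw [norm_smul, b.norm_eq_one, norm_norm, mul_one]

variable {N : ℕ} {p q : ℝ} {G : Set (EuclideanSpace ℝ (Fin N))}
  {u : EuclideanSpace ℝ (Fin N) → ℝ}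

theorem IsStrongSolution.abs_log_sub_le (hu : IsStrongSolution p q G u) (hG : IsOpen G)
    (hN : 1 ≤ N) (hp : 1 < p) (hq : p - 1 < q) (hpos : ∀ x ∈ G, 0 ≤ u x)
    (hGb : ∀ x, 0 < ‖x‖ → ‖x‖ ≤ 1 → x ∈ G) {a b : EuclideanSpace ℝ (Fin N)} {ρ : ℝ}
    (hρ : 0 < ρ) (hseg : ∀ y ∈ segment ℝ a b, ρ ≤ ‖y‖ ∧ ‖y‖ ≤ 1 / 2) :
    |Real.log (u b + 1) - Real.log (u a + 1)| ≤
      2 * gradC N p (q - p + 1) / ρ * ‖b - a‖ := by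
  have hmem : ∀ y ∈ segment ℝ a b, y ∈ G := fun y hy =>
    hGb y (hρ.trans_le (hseg y hy).1) ((hseg y hy).2.trans (by norm_num))
  have hd : ∀ y ∈ segment ℝ a b, HasFDerivWithinAt (fun y => Real.log (u y + 1))
      ((u y + 1)⁻¹ • innerSL ℝ (gradient u y)) (segment ℝ a b) y := by
    intro y hy
    have h1 := hpos y (hmem y hy)
    exact (((hasGradientAt_iff_innerSL.1 (hu.hasGradientAt hG (hmem y hy))).add_const 1).log
      (by linarith)).hasFDerivWithinAt
  refine (convex_segment a b).norm_image_sub_le_of_norm_hasFDerivWithin_le hd ?_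
    (left_mem_segment ℝ a b) (right_mem_segment ℝ a b)
  intro y hy
  have h1 := hpos y (hmem y hy)
  obtain ⟨h2, h3⟩ := hseg y hy
  have hy0 : 0 < ‖y‖ := hρ.trans_le h2
  have hb : closedBall y (‖y‖ / 2) ⊆ G := by
    intro z hz
    rw [mem_closedBall, dist_eq_norm] at hz
    have e1 : ‖y‖ ≤ ‖z - y‖ + ‖z‖ := by
      have := norm_sub_le z (z - y)
      rw [sub_sub_cancel] at this
      linarith
    have e2 : ‖z‖ ≤ ‖z - y‖ + ‖y‖ := by
      have := norm_add_le (z - y) y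
      rwa [sub_add_cancel] at this
    exact hGb z (by linarith) (by linarith)
  have h4 := hu.norm_gradient_le hG hN hp hq hpos (half_pos hy0) hb
  rw [norm_smul, innerSL_apply_norm, norm_inv, Real.norm_eq_abs, abs_of_pos (by linarith),
    inv_mul_le_iff₀ (by linarith)]
  refine h4.trans ?_
  have hC : 0 ≤ gradC N p (q - p + 1) := Real.sqrt_nonneg _
  calc gradC N p (q - p + 1) * (u y + 1) / (‖y‖ / 2)
      = 2 * gradC N p (q - p + 1) * (u y + 1) / ‖y‖ := by
        field_simp
    _ ≤ 2 * gradC N p (q - p + 1) * (u y + 1) / ρ := by gcongr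
    _ = _ := by ring

theorem half_le_norm_of_mem_segment {a b y : EuclideanSpace ℝ (Fin N)} {r : ℝ}
    (ha : ‖a‖ = r) (hb : ‖b‖ = r) (hab : 0 ≤ inner ℝ a b) (hy : y ∈ segment ℝ a b) :
    r / 2 ≤ ‖y‖ ∧ ‖y‖ ≤ r := by
  obtain ⟨s, t, hs, ht, hst, rfl⟩ := hy
  have hr : 0 ≤ r := ha ▸ norm_nonneg a
  constructor
  · refine le_of_sq_le_sq ?_ (norm_nonneg _) 
    rw [norm_add_sq_real, norm_smul, norm_smul, inner_smul_left, inner_smul_right, ha, hb,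
      Real.norm_of_nonneg hs, Real.norm_of_nonneg ht]
    simp only [conj_trivial]
    have h1 : 0 ≤ 2 * (s * (t * inner ℝ a b)) := by positivity
    have h2 : t = 1 - s := by linarith
    subst h2
    nlinarith [mul_nonneg (sq_nonneg (2 * s - 1)) (sq_nonneg r), sq_nonneg r]
  · refine (norm_add_le _ _).trans ?_
    rw [norm_smul, norm_smul, ha, hb, Real.norm_of_nonneg hs, Real.norm_of_nonneg ht, ← add_mul,
      hst, one_mul]

theorem IsStrongSolution.sphere_harnack (hu : IsStrongSolution p q G u) (hG : IsOpen G)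
    (hN : 2 ≤ N) (hp : 1 < p) (hq : p - 1 < q) (hpos : ∀ x ∈ G, 0 ≤ u x)
    (hGb : ∀ x, 0 < ‖x‖ → ‖x‖ ≤ 1 → x ∈ G) {a b : EuclideanSpace ℝ (Fin N)}
    (ha : 0 < ‖a‖) (ha' : ‖a‖ ≤ 1 / 2) (hab : ‖a‖ = ‖b‖) :
    u b + 1 ≤ Real.exp (16 * gradC N p (q - p + 1)) * (u a + 1) := by
  set C := gradC N p (q - p + 1) with hC
  have hC0 : 0 ≤ C := Real.sqrt_nonneg _
  have hstep : ∀ x y : EuclideanSpace ℝ (Fin N), ‖x‖ = ‖a‖ → ‖y‖ = ‖a‖ → 0 ≤ inner ℝ x y →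
      Real.log (u y + 1) - Real.log (u x + 1) ≤ 8 * C := by
    intro x y hx hy hxy
    have h1 := hu.abs_log_sub_le hG (by omega) hp hq hpos hGb (half_pos ha) (a := x) (b := y)
      fun z hz => by
        obtain ⟨h2, h3⟩ := half_le_norm_of_mem_segment hx hy hxy hz
        exact ⟨h2, h3.trans ha'⟩
    refine (le_abs_self _).trans (h1.trans ?_)
    have h2 : ‖y - x‖ ≤ 2 * ‖a‖ := by
      have := norm_sub_le y x
      linarith
    calc 2 * C / (‖a‖ / 2) * ‖y - x‖ ≤ 2 * C / (‖a‖ / 2) * (2 * ‖a‖) := by gcongr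
      _ = 8 * C := by
        field_simp
        ring
  obtain ⟨c, hc, hcn⟩ := exists_orthogonal_norm_eq hN a
  have hlog : Real.log (u b + 1) - Real.log (u a + 1) ≤ 16 * C := by
    rcases le_total 0 (inner ℝ c b) with h | h
    · have h1 := hstep a c rfl hcn hc.ge
      have h2 := hstep c b hcn hab.symm h
      linarith
    · have h1 := hstep a (-c) rfl (by rw [norm_neg, hcn]) (by rw [inner_neg_right, hc, neg_zero])
      have h2 := hstep (-c) b (by rw [norm_neg, hcn]) hab.symm
        (by rw [inner_neg_left]; linarith)
      linarith
  have hua : 0 < u a + 1 := by linarith [hpos a (hGb a ha (by linarith))]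
  have hub : 0 < u b + 1 := by linarith [hpos b (hGb b (hab ▸ ha) (by linarith))]
  rw [← Real.log_le_log_iff hub (by positivity), Real.log_mul (by positivity) hua.ne',
    Real.log_exp]
  linarith

end LogHarnack

section Fundamental

/-- The profile of the fundamental solution, as a function of `|x|²`. -/
noncomputable def mupProfile (N : ℕ) (p t : ℝ) : ℝ :=
  if p < N then ((p - 1) / ((N : ℝ) - p)) * t ^ ((p - (N : ℝ)) / (2 * (p - 1)))
  else -Real.log t / 2

/-- The exponent `(N - 1) / (p - 1)`. -/
noncomputable def sigmaExp (N : ℕ) (p : ℝ) : ℝ := ((N : ℝ) - 1) / (p - 1)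

variable {N : ℕ} {p : ℝ}

theorem mup_eq_profile (hp : 1 < p) (x : EuclideanSpace ℝ (Fin N)) :
    mup N p x = mupProfile N p (‖x‖ ^ 2) := by
  rw [mup, mupProfile]
  split_ifs
  · rw [← Real.rpow_natCast, ← Real.rpow_mul (norm_nonneg x)]
    congr 2
    have : p - 1 ≠ 0 := by linarith
    push_cast
    field_simp
  · rw [Real.log_pow]
    push_cast
    ring

theorem one_le_sigmaExp (hp : 1 < p) (hpN : p ≤ N) : 1 ≤ sigmaExp N p := by
  rw [sigmaExp, le_div_iff₀ (by linarith)]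
  linarith

theorem hasDerivAt_mupProfile (hp : 1 < p) (hpN : p ≤ N) {t : ℝ} (ht : 0 < t) :
    HasDerivAt (mupProfile N p) (-(1 / 2) * t ^ (-(1 + sigmaExp N p) / 2)) t := by
  have h1 : p - 1 ≠ 0 := by linarith
  unfold mupProfile
  split_ifs with h
  · have h2 : (N : ℝ) - p ≠ 0 := by linarith
    refine ((Real.hasDerivAt_rpow_const (Or.inl ht.ne')).const_mul _).congr_deriv ?_
    have e : (p - (N : ℝ)) / (2 * (p - 1)) - 1 = -(1 + sigmaExp N p) / 2 := by
      rw [sigmaExp]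
      field_simp
      ring
    rw [e, ← mul_assoc]
    congr 1
    field_simp
    ring
  · have hpN' : p = N := le_antisymm hpN (not_lt.1 h)
    have e : -(1 + sigmaExp N p) / 2 = -1 := by
      rw [sigmaExp, ← hpN', div_self h1]
      norm_num
    rw [e, Real.rpow_neg_one]
    refine ((Real.hasDerivAt_log ht.ne').fun_neg.div_const 2).congr_deriv ?_
    ring

theorem hasDerivAt_mupProfile_deriv {t : ℝ} (ht : 0 < t) :
    HasDerivAt (fun t : ℝ => -(1 / 2) * t ^ (-(1 + sigmaExp N p) / 2))
      ((1 + sigmaExp N p) / 4 * t ^ (-(1 + sigmaExp N p) / 2) / t) t := by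
  refine ((Real.hasDerivAt_rpow_const (Or.inl ht.ne')).const_mul _).congr_deriv ?_
  rw [Real.rpow_sub_one ht.ne']
  ring

theorem continuousOn_mup (hp : 1 < p) (hpN : p ≤ N) :
    ContinuousOn (mup N p) {0}ᶜ := by
  intro x hx
  have hx0 : 0 < ‖x‖ := norm_pos_iff.2 hx
  have h1 : ContinuousAt (fun y : EuclideanSpace ℝ (Fin N) => mupProfile N p (‖y‖ ^ 2)) x :=
    ContinuousAt.comp (g := mupProfile N p)
      (hasDerivAt_mupProfile hp hpN (by positivity)).continuousAt (by fun_prop)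
  rw [show mup N p = fun y => mupProfile N p (‖y‖ ^ 2) from funext (mup_eq_profile hp)]
  exact h1.continuousWithinAt

theorem pForm_radial {E : Type*} [NormedAddCommGroup E] [InnerProductSpace ℝ E]
    [FiniteDimensional ℝ E] (p f₁ f₂ : ℝ) (x : E) :
    pForm p ((2 * f₁) • x) ((2 * f₁) • ContinuousLinearMap.id ℝ E + (4 * f₂) • rankOne x) =
      4 * f₁ ^ 2 * ‖x‖ ^ 2 *
        (2 * f₁ * (Module.finrank ℝ E + p - 2) + 4 * f₂ * (p - 1) * ‖x‖ ^ 2) := by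
  rw [pForm_add, pForm_smul, pForm_smul, pForm_id, pForm_rankOne, norm_smul, inner_smul_left,
    real_inner_self_eq_norm_sq, mul_pow, Real.norm_eq_abs, sq_abs]
  simp only [conj_trivial]
  ring

variable {q : ℝ} {G : Set (EuclideanSpace ℝ (Fin N))} {u : EuclideanSpace ℝ (Fin N) → ℝ}

theorem IsStrongSolution.le_of_le_on_spheres (hu : IsStrongSolution p q G u) (hG : IsOpen G)
    (hN : 1 ≤ N) (hp : 1 < p) (hpN : p ≤ N) (hGb : ∀ x, 0 < ‖x‖ → ‖x‖ ≤ 1 → x ∈ G)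
    {r₁ r₂ c A : ℝ} (hr₁ : 0 < r₁) (hr₂ : r₂ ≤ 1) (hc : 0 ≤ c)
    (h₁ : ∀ y, ‖y‖ = r₁ → u y ≤ c * mup N p y + A)
    (h₂ : ∀ y, ‖y‖ = r₂ → u y ≤ c * mup N p y + A)
    {x : EuclideanSpace ℝ (Fin N)} (hx₁ : r₁ ≤ ‖x‖) (hx₂ : ‖x‖ ≤ r₂) :
    u x ≤ c * mup N p x + A := by
  have hNr : (1 : ℝ) ≤ N := by exact_mod_cast hN
  by_contra! hlt
  set ε := (u x - (c * mup N p x + A)) / 2 with hε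
  have hε0 : 0 < ε := by linarith
  set S : Set (EuclideanSpace ℝ (Fin N)) := {y | r₁ ≤ ‖y‖ ∧ ‖y‖ ≤ r₂} with hS
  set ψ : EuclideanSpace ℝ (Fin N) → ℝ := fun y => c * mup N p y + A - ε * ‖y‖ ^ 2 with hψ
  have hSc : IsCompact S := by
    refine (isCompact_closedBall (0 : EuclideanSpace ℝ (Fin N)) r₂).of_isClosed_subset ?_ ?_
    · exact (isClosed_le continuous_const continuous_norm).inter
        (isClosed_le continuous_norm continuous_const)
    · intro y hy
      simpa using hy.2
  have hSG : ∀ y ∈ S, y ∈ G := fun y hy => hGb y (hr₁.trans_le hy.1) (hy.2.trans hr₂)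
  have hS0 : S ⊆ {0}ᶜ := fun y hy => norm_pos_iff.1 (hr₁.trans_le hy.1)
  have hcont : ContinuousOn (fun y => u y - ψ y) S := by
    refine (hu.1.continuousOn.mono hSG).sub (ContinuousOn.sub (ContinuousOn.add
      (continuousOn_const.mul ((continuousOn_mup hp hpN).mono hS0)) continuousOn_const) ?_)
    fun_prop
  obtain ⟨z, hz, hmax⟩ := hSc.exists_isMaxOn ⟨x, hx₁, hx₂⟩ hcont
  have hzx : u x - ψ x ≤ u z - ψ z := hmax (show x ∈ S from ⟨hx₁, hx₂⟩)
  have hbig : ε < u z - ψ z := by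
    refine lt_of_lt_of_le ?_ hzx
    have : 0 ≤ ε * ‖x‖ ^ 2 := by positivity
    simp only [hψ]
    linarith
  have hz1 : ‖z‖ ≤ 1 := hz.2.trans hr₂
  have hbd : ¬ u z ≤ c * mup N p z + A := by
    intro h
    have : ε * ‖z‖ ^ 2 ≤ ε := mul_le_of_le_one_right hε0.le (pow_le_one₀ (norm_nonneg z) hz1)
    simp only [hψ] at hbig
    linarith
  have hzl : r₁ < ‖z‖ := lt_of_le_of_ne hz.1 fun h => hbd (h₁ z h.symm)
  have hzr : ‖z‖ < r₂ := lt_of_le_of_ne hz.2 fun h => hbd (h₂ z h)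
  have hloc : IsLocalMax (fun y => u y - ψ y) z := by
    refine hmax.isLocalMax ?_
    have h1 : ∀ᶠ y in 𝓝 z, r₁ < ‖y‖ := continuous_norm.continuousAt.eventually_const_lt hzl
    have h2 : ∀ᶠ y in 𝓝 z, ‖y‖ < r₂ := continuous_norm.continuousAt.eventually_lt_const hzr
    filter_upwards [h1, h2] with y hy1 hy2 using ⟨hy1.le, hy2.le⟩
  have hz0 : 0 < ‖z‖ := hr₁.trans hzl
  set σ := sigmaExp N p with hσ
  have hF : ∀ t : ℝ, 0 < t → HasDerivAt (fun t => c * mupProfile N p t + A - ε * t)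
      (c * (-(1 / 2) * t ^ (-(1 + σ) / 2)) - ε) t := by
    intro t ht
    refine ((((hasDerivAt_mupProfile hp hpN ht).const_mul c).add_const A).sub
      ((hasDerivAt_id t).const_mul ε)).congr_deriv ?_
    rw [mul_one]
  have hF' := ((hasDerivAt_mupProfile_deriv (N := N) (p := p) (t := ‖z - 0‖ ^ 2)
    (by rw [sub_zero]; positivity)).const_mul c).sub_const ε
  have hH := hasHess_radial (x := z) (c := 0) (F := fun t => c * mupProfile N p t + A - ε * t)
    (((eventually_gt_nhds (by rw [sub_zero]; positivity)).mono fun t ht => hF t ht)) hF'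
  have hH' := hH
  simp only [sub_zero] at hH'
  simp only [hψ, mup_eq_profile hp] at hloc
  set T := (‖z‖ ^ 2) ^ (-(1 + σ) / 2) with hT
  have hT0 : 0 ≤ T := by positivity
  have hf : c * (-(1 / 2) * T) - ε < 0 := by
    have : 0 ≤ c * T := by positivity
    linarith
  have htouch := hu.touch hG hp (hSG z hz)
    (smul_ne_zero (by linarith) (norm_pos_iff.1 hz0)) hH' hloc
  rw [pForm_radial, finrank_euclideanSpace_fin] at htouch
  have hσp : (1 + σ) * (p - 1) = N + p - 2 := by
    rw [hσ, sigmaExp, add_mul, div_mul_cancel₀ _ (by linarith)]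
    ring
  have hbr : 2 * (c * (-(1 / 2) * T) - ε) * ((N : ℝ) + p - 2) +
      4 * (c * ((1 + σ) / 4 * T / ‖z‖ ^ 2)) * (p - 1) * ‖z‖ ^ 2 = -(2 * ε * (N + p - 2)) := by
    field_simp
    rw [mul_assoc, hσp]
    ring
  rw [hbr] at htouch
  have h1 : 0 < 4 * (c * (-(1 / 2) * T) - ε) ^ 2 * ‖z‖ ^ 2 := by
    have := sq_pos_of_neg hf
    positivity
  have h2 : 0 < 2 * ε * (N + p - 2) := mul_pos (by linarith) (by linarith)
  nlinarith

end Fundamental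

section Barrier

variable {E : Type*} [NormedAddCommGroup E] [InnerProductSpace ℝ E] [FiniteDimensional ℝ E]

theorem barrier_pForm_neg {p σ α β γ : ℝ} {x d : E}
    (hσ : (1 + σ) * (p - 1) = Module.finrank ℝ E + p - 2) (hσ1 : 1 ≤ σ) (hβ : 0 ≤ β) (hγ : 0 < γ)
    (hx : x ≠ 0) (hd : d ≠ 0)
    (hα : Module.finrank ℝ E + p - 2 + 1 ≤ 2 * α * min 1 (p - 1) * ‖d‖ ^ 2)
    (hα0 : 0 ≤ α)
    (hsmall : β = 0 ∨ 0 < β ∧ γ * ‖d‖ ≤ β * ‖x‖ / 2 ∧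
      (1 + σ) * |2 - p| * γ * ‖d‖ ^ 2 < β * ‖x‖ ^ 2 / 4) :
    (-β) • x + γ • d ≠ 0 ∧
    pForm p ((-β) • x + γ • d)
      (((-β) • ContinuousLinearMap.id ℝ E + (β * (1 + σ) / ‖x‖ ^ 2) • rankOne x) +
        (γ • ContinuousLinearMap.id ℝ E + (-(2 * α * γ)) • rankOne d)) < 0 := by
  set g := (-β) • x + γ • d with hg
  set m := min 1 (p - 1) with hm
  have hxn : 0 < ‖x‖ := norm_pos_iff.2 hx
  have hdn : 0 < ‖d‖ := norm_pos_iff.2 hd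
  have hmain : β * ((1 + σ) * |2 - p| * γ * ‖d‖ ^ 2) < ‖g‖ ^ 2 := by
    rcases hsmall with h | ⟨h0, h1, h2⟩
    · rw [hg, h, neg_zero, zero_smul, zero_add, zero_mul, norm_smul]
      have : 0 < ‖γ‖ := norm_pos_iff.2 hγ.ne'
      positivity
    · have h3 : β * ‖x‖ / 2 ≤ ‖g‖ := by
        have h6 := norm_sub_norm_le (β • x) (γ • d)
        have h7 : β • x - γ • d = -g := by
          rw [hg]
          module
        rw [h7, norm_neg, norm_smul, norm_smul, Real.norm_of_nonneg hβ,
          Real.norm_of_nonneg hγ.le] at h6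
        linarith
      calc β * ((1 + σ) * |2 - p| * γ * ‖d‖ ^ 2) < β * (β * ‖x‖ ^ 2 / 4) := by gcongr
        _ = (β * ‖x‖ / 2) ^ 2 := by ring
        _ ≤ ‖g‖ ^ 2 := by gcongr
  have hg2 : 0 < ‖g‖ ^ 2 := by
    refine lt_of_le_of_lt ?_ hmain
    have : 0 ≤ 1 + σ := by linarith
    positivity
  refine ⟨fun h => by simp [h] at hg2, ?_⟩
  rw [pForm_add, pForm_add, pForm_add, pForm_smul, pForm_smul, pForm_smul, pForm_smul, pForm_id,
    pForm_rankOne, pForm_rankOne, ← hσ]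
  have hgx : inner ℝ g x = -β * ‖x‖ ^ 2 + γ * inner ℝ d x := by
    rw [hg, inner_add_left, inner_smul_left, inner_smul_left, real_inner_self_eq_norm_sq]
    simp
  have hgg : ‖g‖ ^ 2 = β ^ 2 * ‖x‖ ^ 2 - 2 * β * γ * inner ℝ d x + γ ^ 2 * ‖d‖ ^ 2 := by
    rw [hg, norm_add_sq_real, norm_smul, norm_smul, inner_smul_left, inner_smul_right,
      real_inner_comm d x, mul_pow, mul_pow, Real.norm_eq_abs, Real.norm_eq_abs, sq_abs, sq_abs]
    simp
    ring
  have hsq : ∀ a b : E, inner ℝ a b ^ 2 ≤ ‖a‖ ^ 2 * ‖b‖ ^ 2 := fun a b => by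
    rw [← mul_pow, sq_le_sq, abs_of_nonneg (by positivity : 0 ≤ ‖a‖ * ‖b‖)]
    exact abs_real_inner_le_norm _ _
  have hW : ‖g‖ ^ 2 - inner ℝ g x ^ 2 / ‖x‖ ^ 2
      = γ ^ 2 * (‖d‖ ^ 2 - inner ℝ d x ^ 2 / ‖x‖ ^ 2) := by
    rw [hgx, hgg]
    field_simp
    ring
  set W := ‖d‖ ^ 2 - inner ℝ d x ^ 2 / ‖x‖ ^ 2 with hWdef
  have hW0 : 0 ≤ W := by
    rw [hWdef, sub_nonneg, div_le_iff₀ (by positivity)]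
    exact hsq d x
  have hW1 : W ≤ ‖d‖ ^ 2 := by
    rw [hWdef, sub_le_self_iff]
    positivity
  have hm2 : m * (‖g‖ ^ 2 * ‖d‖ ^ 2) ≤ ‖g‖ ^ 2 * ‖d‖ ^ 2 + (p - 2) * inner ℝ g d ^ 2 := by
    have h1 := hsq g d
    have h2 : 0 ≤ inner ℝ g d ^ 2 := sq_nonneg _
    have h3 : m ≤ 1 := min_le_left _ _
    have h4 : m ≤ p - 1 := min_le_right _ _
    nlinarith [mul_nonneg (sub_nonneg.2 h3) (sub_nonneg.2 h1), mul_nonneg (sub_nonneg.2 h4) h2]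
  have hσ0 : 0 ≤ 1 + σ := by linarith
  have h1 : (2 - p) * (γ ^ 2 * W) ≤ |2 - p| * (γ ^ 2 * ‖d‖ ^ 2) := by
    refine (mul_le_mul_of_nonneg_right (le_abs_self _) (by positivity)).trans ?_
    gcongr
  have h2 : β * (1 + σ) * ((2 - p) * (γ ^ 2 * W)) ≤
      β * (1 + σ) * (|2 - p| * (γ ^ 2 * ‖d‖ ^ 2)) := by gcongr
  have h3 : ‖g‖ ^ 2 * ((1 + σ) * (p - 1) + 1) ≤ ‖g‖ ^ 2 * (2 * α * m * ‖d‖ ^ 2) := by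
    rw [hσ]
    gcongr
  have h4 : 2 * α * γ * (m * (‖g‖ ^ 2 * ‖d‖ ^ 2)) ≤
      2 * α * γ * (‖g‖ ^ 2 * ‖d‖ ^ 2 + (p - 2) * inner ℝ g d ^ 2) := by gcongr
  have e1 : -β * ((1 + σ) * (p - 1) * ‖g‖ ^ 2) + β * (1 + σ) / ‖x‖ ^ 2 *
      (‖g‖ ^ 2 * ‖x‖ ^ 2 + (p - 2) * inner ℝ g x ^ 2) =
      β * (1 + σ) * ((2 - p) * (γ ^ 2 * W)) := by
    rw [← hW]
    field_simp
    ring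
  rw [e1]
  have h5 := mul_lt_mul_of_pos_left hmain hγ
  have h6 := mul_le_mul_of_nonneg_left h3 hγ.le
  linarith

/-- A strict supersolution obtained by perturbing `k |x|^{1-σ}` by a Gaussian centred at `y`. -/
noncomputable def barrier {E : Type*} [NormedAddCommGroup E] (k σ τ α ρ : ℝ) (y x : E) : ℝ :=
  k * (‖x‖ ^ 2) ^ ((1 - σ) / 2) -
    τ * (Real.exp (-α * ‖x - y‖ ^ 2) - Real.exp (-α * ρ ^ 2))

theorem hasHess_barrier (k σ τ α ρ : ℝ) (y : E) {x : E} (hx : x ≠ 0) :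
    HasHess (barrier k σ τ α ρ y) x
      ((-(k * (σ - 1) * (‖x‖ ^ 2) ^ ((-1 - σ) / 2))) • x +
        (2 * τ * α * Real.exp (-α * ‖x - y‖ ^ 2)) • (x - y))
      (((-(k * (σ - 1) * (‖x‖ ^ 2) ^ ((-1 - σ) / 2))) • ContinuousLinearMap.id ℝ E +
        ((k * (σ - 1) * (‖x‖ ^ 2) ^ ((-1 - σ) / 2)) * (1 + σ) / ‖x‖ ^ 2) • rankOne x) +
        ((2 * τ * α * Real.exp (-α * ‖x - y‖ ^ 2)) • ContinuousLinearMap.id ℝ E +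
          (-(2 * α * (2 * τ * α * Real.exp (-α * ‖x - y‖ ^ 2)))) • rankOne (x - y))) := by
  have ht0 : 0 < ‖x‖ ^ 2 := by
    have := norm_pos_iff.2 hx
    positivity
  have hF : ∀ t : ℝ, 0 < t → HasDerivAt (fun t : ℝ => k * t ^ ((1 - σ) / 2))
      (k * ((1 - σ) / 2 * t ^ ((-1 - σ) / 2))) t := by
    intro t ht
    refine ((Real.hasDerivAt_rpow_const (Or.inl ht.ne')).const_mul _).congr_deriv ?_
    rw [show (1 - σ) / 2 - 1 = (-1 - σ) / 2 by ring]
  have hF' : HasDerivAt (fun t : ℝ => k * ((1 - σ) / 2 * t ^ ((-1 - σ) / 2)))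
      (k * ((1 - σ) / 2 * ((-1 - σ) / 2 * ((‖x‖ ^ 2) ^ ((-1 - σ) / 2) / ‖x‖ ^ 2)))) (‖x‖ ^ 2) := by
    refine (((Real.hasDerivAt_rpow_const (Or.inl ht0.ne')).const_mul _).const_mul _).congr_deriv ?_
    rw [Real.rpow_sub_one ht0.ne']
  have hH : ∀ t : ℝ, HasDerivAt
      (fun t : ℝ => -τ * (Real.exp (-α * t) - Real.exp (-α * ρ ^ 2)))
      (τ * α * Real.exp (-α * t)) t := by
    intro t
    refine (((((hasDerivAt_id t).const_mul (-α)).exp).sub_const _).const_mul (-τ)).congr_deriv ?_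
    simp only [id]
    ring
  have hH' : ∀ t : ℝ, HasDerivAt (fun t : ℝ => τ * α * Real.exp (-α * t))
      (-(τ * α ^ 2 * Real.exp (-α * t))) t := by
    intro t
    refine ((((hasDerivAt_id t).const_mul (-α)).exp).const_mul (τ * α)).congr_deriv ?_
    simp only [id]
    ring
  have k1 := hasHess_radial (x := x) (c := 0) (F := fun t : ℝ => k * t ^ ((1 - σ) / 2))
    (((eventually_gt_nhds (by rwa [sub_zero])).mono fun t ht => hF t ht))
    (by rw [sub_zero]; exact hF')
  have k2 := hasHess_radial (x := x) (c := y)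
    (F := fun t : ℝ => -τ * (Real.exp (-α * t) - Real.exp (-α * ρ ^ 2)))
    (Eventually.of_forall hH) (hH' _)
  have k3 := k1.add k2
  simp only [sub_zero] at k3
  have e0 : barrier k σ τ α ρ y = fun x : E => k * (‖x‖ ^ 2) ^ ((1 - σ) / 2) +
      -τ * (Real.exp (-α * ‖x - y‖ ^ 2) - Real.exp (-α * ρ ^ 2)) := by
    funext z
    rw [barrier]
    ring
  rw [e0]
  convert k3 using 2
  · congr 1
    ring
  · congr 1
    ring
  · congr 2
    · ring
    · ring
  · congr 2
    · ring
    · ring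

theorem exists_barrier {p σ k : ℝ} (hp : 1 < p)
    (hσ : (1 + σ) * (p - 1) = Module.finrank ℝ E + p - 2) (hσ1 : 1 ≤ σ) (hk : 0 < k)
    {x₀ y : E} (hx : x₀ ≠ 0) (hxy : x₀ ≠ y) :
    ∃ α > 0, ∃ s > 0, s < ‖x₀‖ ∧ ∀ᶠ τ in 𝓝[>] (0 : ℝ), ∀ x ∈ closedBall x₀ s, ∀ ρ : ℝ,
      ∃ g B, HasHess (barrier k σ τ α ρ y) x g B ∧ g ≠ 0 ∧ pForm p g B < 0 := by
  have hx0 : 0 < ‖x₀‖ := norm_pos_iff.2 hx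
  have hd0 : 0 < ‖x₀ - y‖ := norm_pos_iff.2 (sub_ne_zero.2 hxy)
  have hm : 0 < min 1 (p - 1) := lt_min one_pos (by linarith)
  have hA : 0 < (Module.finrank ℝ E : ℝ) + p - 2 + 1 := by
    rw [← hσ]
    have : 0 < (1 + σ) * (p - 1) := mul_pos (by linarith) (by linarith)
    linarith
  set α := ((Module.finrank ℝ E : ℝ) + p - 2 + 1) / (2 * min 1 (p - 1) * (‖x₀ - y‖ / 2) ^ 2)
    with hαdef
  have hα : 0 < α := by positivity
  set s := min (‖x₀‖ / 2) (‖x₀ - y‖ / 2) with hs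
  have hs1 : s ≤ ‖x₀‖ / 2 := min_le_left _ _
  have hs2 : s ≤ ‖x₀ - y‖ / 2 := min_le_right _ _
  refine ⟨α, hα, s, lt_min (by linarith) (by linarith), by linarith, ?_⟩
  set β₀ := k * (σ - 1) * ((2 * ‖x₀‖) ^ 2) ^ ((-1 - σ) / 2) with hβ₀
  have hev : σ = 1 ∨ ∀ᶠ τ in 𝓝[>] (0 : ℝ),
      2 * τ * α * (2 * ‖x₀ - y‖) < β₀ * (‖x₀‖ / 2) / 2 ∧
      (1 + σ) * |2 - p| * (2 * τ * α) * (2 * ‖x₀ - y‖) ^ 2 < β₀ * (‖x₀‖ / 2) ^ 2 / 4 := by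
    rcases hσ1.eq_or_lt with h | h
    · exact Or.inl h.symm
    · right
      have hβpos : 0 < β₀ := by
        have : 0 < σ - 1 := by linarith
        positivity
      have t1 : Tendsto (fun τ : ℝ => 2 * τ * α * (2 * ‖x₀ - y‖)) (𝓝[>] 0) (𝓝 0) := by
        have : Continuous fun τ : ℝ => 2 * τ * α * (2 * ‖x₀ - y‖) := by fun_prop
        simpa using (this.tendsto 0).mono_left nhdsWithin_le_nhds
      have t2 : Tendsto (fun τ : ℝ => (1 + σ) * |2 - p| * (2 * τ * α) * (2 * ‖x₀ - y‖) ^ 2)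
          (𝓝[>] 0) (𝓝 0) := by
        have : Continuous fun τ : ℝ => (1 + σ) * |2 - p| * (2 * τ * α) * (2 * ‖x₀ - y‖) ^ 2 := by
          fun_prop
        simpa using (this.tendsto 0).mono_left nhdsWithin_le_nhds
      exact (t1.eventually_lt_const (by positivity)).and (t2.eventually_lt_const (by positivity))
  have hmain : ∀ τ : ℝ, 0 < τ → (σ = 1 ∨ (2 * τ * α * (2 * ‖x₀ - y‖) < β₀ * (‖x₀‖ / 2) / 2 ∧
      (1 + σ) * |2 - p| * (2 * τ * α) * (2 * ‖x₀ - y‖) ^ 2 < β₀ * (‖x₀‖ / 2) ^ 2 / 4)) →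
      ∀ x ∈ closedBall x₀ s, ∀ ρ : ℝ,
      ∃ g B, HasHess (barrier k σ τ α ρ y) x g B ∧ g ≠ 0 ∧ pForm p g B < 0 := by
    intro τ hτ hcond x hxb ρ
    rw [mem_closedBall, dist_eq_norm] at hxb
    have n1 : ‖x₀‖ ≤ ‖x - x₀‖ + ‖x‖ := by
      have := norm_sub_le x (x - x₀)
      rw [sub_sub_cancel] at this
      linarith
    have n2 : ‖x‖ ≤ ‖x - x₀‖ + ‖x₀‖ := by
      have := norm_add_le (x - x₀) x₀
      rwa [sub_add_cancel] at this
    have n3 : ‖x₀ - y‖ ≤ ‖x - x₀‖ + ‖x - y‖ := by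
      have := norm_sub_le (x - y) (x - x₀)
      rw [sub_sub_sub_cancel_left] at this
      linarith
    have n4 : ‖x - y‖ ≤ ‖x - x₀‖ + ‖x₀ - y‖ := by
      have := norm_add_le (x - x₀) (x₀ - y)
      rwa [sub_add_sub_cancel] at this
    have a1 : ‖x₀‖ / 2 ≤ ‖x‖ := by linarith
    have a2 : ‖x‖ ≤ 2 * ‖x₀‖ := by linarith
    have a3 : ‖x₀ - y‖ / 2 ≤ ‖x - y‖ := by linarith
    have a4 : ‖x - y‖ ≤ 2 * ‖x₀ - y‖ := by linarith
    have hxn : 0 < ‖x‖ := by linarith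
    have hdn : 0 < ‖x - y‖ := by linarith
    refine ⟨_, _, hasHess_barrier k σ τ α ρ y (norm_pos_iff.1 hxn), ?_⟩
    have hexp : Real.exp (-α * ‖x - y‖ ^ 2) ≤ 1 := by
      rw [Real.exp_le_one_iff]
      have : 0 ≤ α * ‖x - y‖ ^ 2 := by positivity
      linarith
    have hγ : 2 * τ * α * Real.exp (-α * ‖x - y‖ ^ 2) ≤ 2 * τ * α :=
      mul_le_of_le_one_right (by positivity) hexp
    have hσ0 : 0 ≤ σ - 1 := by linarith
    refine barrier_pForm_neg hσ hσ1 (by positivity) (by positivity) (norm_pos_iff.1 hxn)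
      (norm_pos_iff.1 hdn) ?_ hα.le ?_
    · calc (Module.finrank ℝ E : ℝ) + p - 2 + 1
          = 2 * α * min 1 (p - 1) * (‖x₀ - y‖ / 2) ^ 2 := by
            rw [hαdef]
            field_simp
        _ ≤ _ := by gcongr
    · rcases hcond with h | ⟨h1, h2⟩
      · left
        rw [h]
        ring
      · have hβle : β₀ ≤ k * (σ - 1) * (‖x‖ ^ 2) ^ ((-1 - σ) / 2) := by
          rw [hβ₀]
          refine mul_le_mul_of_nonneg_left ?_ (by positivity)
          refine Real.rpow_le_rpow_of_nonpos (by positivity) (by gcongr) (by linarith)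
        have hβ0 : 0 < β₀ := by
          by_contra! hneg
          have : 0 ≤ 2 * τ * α * (2 * ‖x₀ - y‖) := by positivity
          nlinarith
        right
        refine ⟨hβ0.trans_le hβle, ?_, ?_⟩
        · calc _ ≤ 2 * τ * α * (2 * ‖x₀ - y‖) := by gcongr
            _ ≤ β₀ * (‖x₀‖ / 2) / 2 := h1.le
            _ ≤ _ := by gcongr
        · have : 0 ≤ 1 + σ := by linarith
          calc _ ≤ (1 + σ) * |2 - p| * (2 * τ * α) * (2 * ‖x₀ - y‖) ^ 2 := by gcongr
            _ < β₀ * (‖x₀‖ / 2) ^ 2 / 4 := h2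
            _ ≤ _ := by gcongr
  rcases hev with h | h
  · filter_upwards [self_mem_nhdsWithin] with τ hτ using hmain τ hτ (Or.inl h)
  · filter_upwards [self_mem_nhdsWithin, h] with τ hτ h' using hmain τ hτ (Or.inr h')

end Barrier

section BlowUp

theorem continuousOn_rpow_norm_sq {E : Type*} [NormedAddCommGroup E] (k s : ℝ) :
    ContinuousOn (fun x : E => k * (‖x‖ ^ 2) ^ s) {0}ᶜ := by
  refine continuousOn_const.mul ((by fun_prop : ContinuousOn (fun x : E => ‖x‖ ^ 2) _).rpow_const
    fun x hx => Or.inl ?_)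
  have : x ≠ 0 := hx
  simpa using this

theorem norm_pos_of_mem_closedBall {E : Type*} [NormedAddCommGroup E] {ξ z : E} {s : ℝ}
    (hs : s < ‖ξ‖) (hz : z ∈ closedBall ξ s) :
    z ≠ 0 := by
  rintro rfl
  rw [mem_closedBall, dist_zero_left] at hz
  exact absurd hz (not_le.2 hs)

variable {E : Type*} [NormedAddCommGroup E] [InnerProductSpace ℝ E] [FiniteDimensional ℝ E]

/-- A family of functions on `E \ {0}` converging along an ultrafilter, with a uniform local
Harnack inequality, whose members are viscosity subsolutions of the p-Laplace equation. -/
structure IsBlowUp {ι : Type*} (𝒰 : Ultrafilter ι) (p : ℝ) (U : ι → E → ℝ) (e : ι → ℝ)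
    (w : E → ℝ) : Prop where
  tendsto_shift : Tendsto e 𝒰 (𝓝 0)
  tendsto : ∀ y ≠ 0, Tendsto (fun i => U i y) 𝒰 (𝓝 (w y))
  harnack : ∀ ξ : E, ξ ≠ 0 → ∃ K : ℝ, ∀ᶠ i in 𝒰, ∀ y ∈ closedBall ξ (‖ξ‖ / 2),
    ∀ y' ∈ closedBall ξ (‖ξ‖ / 2), U i y' + e i ≤ (U i y + e i) * Real.exp (K * ‖y' - y‖)
  continuousOn : ∀ ξ : E, ∀ s < ‖ξ‖, ∀ᶠ i in 𝒰, ContinuousOn (U i) (closedBall ξ s)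
  touch : ∀ ξ : E, ∀ s < ‖ξ‖, ∀ᶠ i in 𝒰, ∀ z ∈ ball ξ s, ∀ (ψ : E → ℝ) (g : E) (B : E →L[ℝ] E),
    HasHess ψ z g B → g ≠ 0 → IsLocalMax (fun y => U i y - ψ y) z → 0 ≤ pForm p g B

variable {ι : Type*} {𝒰 : Ultrafilter ι} {p : ℝ} {U : ι → E → ℝ} {e : ι → ℝ} {w : E → ℝ}

theorem IsBlowUp.tendsto_moving (h : IsBlowUp 𝒰 p U e w) {ξ : ι → E} {ξ₀ : E} (h₀ : ξ₀ ≠ 0)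
    (hξ : Tendsto ξ 𝒰 (𝓝 ξ₀)) : Tendsto (fun i => U i (ξ i)) 𝒰 (𝓝 (w ξ₀)) := by
  obtain ⟨K, hK⟩ := h.harnack ξ₀ h₀
  have hr : 0 < ‖ξ₀‖ / 2 := half_pos (norm_pos_iff.2 h₀)
  have hmem : ∀ᶠ i in (𝒰 : Filter ι), ξ i ∈ closedBall ξ₀ (‖ξ₀‖ / 2) :=
    hξ.eventually (closedBall_mem_nhds ξ₀ hr)
  have hn : Tendsto (fun i => ‖ξ i - ξ₀‖) 𝒰 (𝓝 0) := tendsto_iff_norm_sub_tendsto_zero.1 hξ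
  have hexp : ∀ c : ℝ, Tendsto (fun i => Real.exp (c * ‖ξ i - ξ₀‖)) 𝒰 (𝓝 1) := fun c => by
    simpa [Function.comp_def] using (Real.continuous_exp.tendsto _).comp (hn.const_mul c)
  have h1 : Tendsto (fun i => U i ξ₀ + e i) 𝒰 (𝓝 (w ξ₀)) := by
    simpa using (h.tendsto ξ₀ h₀).add h.tendsto_shift
  have hup : Tendsto (fun i => (U i ξ₀ + e i) * Real.exp (K * ‖ξ i - ξ₀‖) - e i) 𝒰
      (𝓝 (w ξ₀)) := by
    simpa using (h1.mul (hexp K)).sub h.tendsto_shift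
  have hlo : Tendsto (fun i => (U i ξ₀ + e i) * Real.exp (-K * ‖ξ i - ξ₀‖) - e i) 𝒰
      (𝓝 (w ξ₀)) := by
    simpa using (h1.mul (hexp (-K))).sub h.tendsto_shift
  refine tendsto_of_tendsto_of_tendsto_of_le_of_le' hlo hup ?_ ?_
  · filter_upwards [hK, hmem] with i hi hm
    have h2 := hi (ξ i) hm ξ₀ (mem_closedBall_self hr.le)
    rw [norm_sub_rev] at h2
    have h3 := mul_le_mul_of_nonneg_right h2 (Real.exp_pos (-K * ‖ξ i - ξ₀‖)).le
    rw [mul_assoc, ← Real.exp_add, neg_mul, add_neg_cancel, Real.exp_zero, mul_one] at h3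
    rw [neg_mul]
    linarith
  · filter_upwards [hK, hmem] with i hi hm
    have h2 := hi ξ₀ (mem_closedBall_self hr.le) (ξ i) hm
    linarith

theorem IsBlowUp.continuousOn_limit (h : IsBlowUp 𝒰 p U e w) : ContinuousOn w {0}ᶜ := by
  intro ξ₀ h₀
  refine ContinuousAt.continuousWithinAt ?_
  have h₀' : ξ₀ ≠ 0 := h₀
  obtain ⟨K, hK⟩ := h.harnack ξ₀ h₀
  have hr : 0 < ‖ξ₀‖ / 2 := half_pos (norm_pos_iff.2 h₀)
  have hlim : ∀ y ≠ 0, Tendsto (fun i => U i y + e i) 𝒰 (𝓝 (w y)) := fun y hy => by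
    simpa using (h.tendsto y hy).add h.tendsto_shift
  have hle : ∀ y ∈ closedBall ξ₀ (‖ξ₀‖ / 2), ∀ y' ∈ closedBall ξ₀ (‖ξ₀‖ / 2), y ≠ 0 → y' ≠ 0 →
      w y' ≤ w y * Real.exp (K * ‖y' - y‖) := by
    intro y hy y' hy' hy0 hy0'
    refine le_of_tendsto_of_tendsto (hlim y' hy0') ((hlim y hy0).mul_const _) ?_
    filter_upwards [hK] with i hi using hi y hy y' hy'
  have hexp : ∀ c : ℝ, Tendsto (fun y => w ξ₀ * Real.exp (c * ‖y - ξ₀‖)) (𝓝 ξ₀) (𝓝 (w ξ₀)) := by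
    intro c
    have : Continuous fun y => w ξ₀ * Real.exp (c * ‖y - ξ₀‖) := by fun_prop
    simpa using this.tendsto ξ₀
  have hev : ∀ᶠ y in 𝓝 ξ₀, y ∈ closedBall ξ₀ (‖ξ₀‖ / 2) ∧ y ≠ 0 :=
    (closedBall_mem_nhds ξ₀ hr : _ ∈ 𝓝 ξ₀) |> fun h1 =>
      Filter.Eventually.and h1 (eventually_ne_nhds h₀')
  refine tendsto_of_tendsto_of_tendsto_of_le_of_le' (hexp (-K)) (hexp K) ?_ ?_
  · filter_upwards [hev] with y hy
    have h2 := hle y hy.1 ξ₀ (mem_closedBall_self hr.le) hy.2 h₀'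
    rw [norm_sub_rev] at h2
    have h3 := mul_le_mul_of_nonneg_right h2 (Real.exp_pos (-K * ‖y - ξ₀‖)).le
    rw [mul_assoc, ← Real.exp_add, neg_mul, add_neg_cancel, Real.exp_zero, mul_one] at h3
    rwa [neg_mul]
  · filter_upwards [hev] with y hy
    exact hle ξ₀ (mem_closedBall_self hr.le) y hy.1 h₀' hy.2

theorem continuousOn_barrier {E : Type*} [NormedAddCommGroup E]
    (k σ τ α ρ : ℝ) (y : E) :
    ContinuousOn (barrier k σ τ α ρ y) {0}ᶜ := by
  refine ContinuousOn.sub (continuousOn_rpow_norm_sq k _) (Continuous.continuousOn ?_)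
  fun_prop

/-- The limit of a blow-up family cannot touch `k |x|^{1-σ}` from below at a boundary point of a
ball off the contact set. -/
theorem IsBlowUp.not_touching (h : IsBlowUp 𝒰 p U e w) {σ k : ℝ} (hp : 1 < p)
    (hσ : (1 + σ) * (p - 1) = Module.finrank ℝ E + p - 2) (hσ1 : 1 ≤ σ) (hk : 0 < k)
    (hw : ∀ x ≠ 0, w x ≤ k * (‖x‖ ^ 2) ^ ((1 - σ) / 2)) {x₀ y : E} (hx : x₀ ≠ 0) (hxy : x₀ ≠ y)
    (hx₀ : w x₀ = k * (‖x₀‖ ^ 2) ^ ((1 - σ) / 2))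
    (hlt : ∀ z ∈ closedBall y ‖x₀ - y‖, z ≠ 0 → z ≠ x₀ →
      w z < k * (‖z‖ ^ 2) ^ ((1 - σ) / 2)) : False := by
  obtain ⟨α, hα, s, hs, hsx, hev⟩ := exists_barrier hp hσ hσ1 hk hx hxy
  set ρ := ‖x₀ - y‖ with hρ
  set P := sphere x₀ s ∩ closedBall y ρ with hP
  have hPc : IsCompact P := (isCompact_sphere x₀ s).inter_right isClosed_closedBall
  have hS0 : ∀ z ∈ sphere x₀ s, z ≠ 0 := fun z hz =>
    norm_pos_of_mem_closedBall hsx (sphere_subset_closedBall hz)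
  have hP0 : P ⊆ {0}ᶜ := fun z hz => hS0 z hz.1
  obtain ⟨m, hm, hmP⟩ : ∃ m > 0, ∀ z ∈ P, m ≤ k * (‖z‖ ^ 2) ^ ((1 - σ) / 2) - w z := by
    rcases P.eq_empty_or_nonempty with he | hne
    · exact ⟨1, one_pos, fun z hz => by simp [he] at hz⟩
    · obtain ⟨z₁, hz₁, hmin⟩ := hPc.exists_isMinOn hne
        (((continuousOn_rpow_norm_sq k ((1 - σ) / 2)).sub h.continuousOn_limit).mono hP0)
      refine ⟨_, sub_pos.2 (hlt z₁ hz₁.2 (hP0 hz₁) ?_), fun z hz => hmin hz⟩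
      rintro rfl
      have := hz₁.1
      simp [hs.ne] at this
  have hτm : ∀ᶠ τ in 𝓝[>] (0 : ℝ), τ < m :=
    (eventually_lt_nhds hm).filter_mono nhdsWithin_le_nhds
  obtain ⟨τ, hτ, hτm, hτ0⟩ := (hev.and (hτm.and self_mem_nhdsWithin)).exists
  have hτ0 : 0 < τ := hτ0
  set ψ := barrier k σ τ α ρ y with hψ
  have hψx₀ : ψ x₀ = w x₀ := by
    rw [hψ, barrier, hx₀, ← hρ]
    ring
  have hsphere : ∀ z ∈ sphere x₀ s, w z < ψ z := by
    intro z hz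
    have hz0 := hS0 z hz
    by_cases hzy : z ∈ closedBall y ρ
    · have h1 := hmP z ⟨hz, hzy⟩
      have h2 : Real.exp (-α * ‖z - y‖ ^ 2) ≤ 1 := by
        rw [Real.exp_le_one_iff]
        have : 0 ≤ α * ‖z - y‖ ^ 2 := by positivity
        linarith
      have h3 : 0 < Real.exp (-α * ρ ^ 2) := Real.exp_pos _
      have h4 : τ * (Real.exp (-α * ‖z - y‖ ^ 2) - Real.exp (-α * ρ ^ 2)) ≤ τ * 1 := by
        gcongr
        linarith
      rw [hψ, barrier]
      linarith
    · have h1 : ρ < ‖z - y‖ := by simpa [dist_eq_norm] using hzy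
      have h2 : Real.exp (-α * ‖z - y‖ ^ 2) < Real.exp (-α * ρ ^ 2) := by
        rw [Real.exp_lt_exp, neg_mul, neg_mul, neg_lt_neg_iff]
        have : 0 ≤ ρ := norm_nonneg _
        gcongr
      have h3 := hw z hz0
      have h4 : 0 < τ * (Real.exp (-α * ρ ^ 2) - Real.exp (-α * ‖z - y‖ ^ 2)) :=
        mul_pos hτ0 (sub_pos.2 h2)
      rw [hψ, barrier]
      linarith
  have hball0 : closedBall x₀ s ⊆ {0}ᶜ := fun z hz => norm_pos_of_mem_closedBall hsx hz
  have hψc : ContinuousOn ψ (closedBall x₀ s) := (continuousOn_barrier k σ τ α ρ y).mono hball0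
  have hmaxev : ∀ᶠ i in (𝒰 : Filter ι), ∃ z ∈ sphere x₀ s, U i x₀ - ψ x₀ ≤ U i z - ψ z := by
    filter_upwards [h.continuousOn x₀ s hsx, h.touch x₀ s hsx] with i hc ht
    obtain ⟨z, hz, hmax⟩ := (isCompact_closedBall x₀ s).exists_isMaxOn
      ⟨x₀, mem_closedBall_self hs.le⟩ (hc.sub hψc)
    refine ⟨z, ?_, hmax (mem_closedBall_self hs.le)⟩
    by_contra hzs
    have hzb : z ∈ ball x₀ s := lt_of_le_of_ne hz hzs
    obtain ⟨g, B, hH, hg, hneg⟩ := hτ z hz ρ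
    have hloc : IsLocalMax (fun y => U i y - ψ y) z :=
      hmax.isLocalMax (mem_of_superset (isOpen_ball.mem_nhds hzb) ball_subset_closedBall)
    exact absurd (ht z hzb ψ g B hH hg hloc) (not_le.2 hneg)
  choose! ξ hξs hξ using fun i (hi : ∃ z ∈ sphere x₀ s, U i x₀ - ψ x₀ ≤ U i z - ψ z) => hi
  obtain ⟨ξ₀, hξ₀, hlim⟩ := (isCompact_sphere x₀ s).ultrafilter_le_nhds (𝒰.map ξ)
    (le_principal_iff.2 (hmaxev.mono fun i hi => hξs i hi))
  have hξ₀0 := hS0 ξ₀ hξ₀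
  have hξt : Tendsto ξ 𝒰 (𝓝 ξ₀) := hlim
  have hU := h.tendsto_moving hξ₀0 hξt
  have hψt : Tendsto (fun i => ψ (ξ i)) 𝒰 (𝓝 (ψ ξ₀)) :=
    ((continuousOn_barrier k σ τ α ρ y).continuousAt
      (isOpen_compl_singleton.mem_nhds hξ₀0)).tendsto.comp hξt
  have hfin := le_of_tendsto_of_tendsto ((h.tendsto x₀ hx).sub_const (ψ x₀)) (hU.sub hψt)
    (hmaxev.mono fun i hi => hξ i hi)
  have := hsphere ξ₀ hξ₀
  linarith

/-- Strong maximum principle: the limit of a blow-up family that lies below `k |x|^{1-σ}` and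
touches it somewhere coincides with it. -/
theorem IsBlowUp.eq_of_eq (h : IsBlowUp 𝒰 p U e w) {σ k : ℝ} (hp : 1 < p)
    (hE : 1 < Module.finrank ℝ E)
    (hσ : (1 + σ) * (p - 1) = Module.finrank ℝ E + p - 2) (hσ1 : 1 ≤ σ) (hk : 0 < k)
    (hw : ∀ x ≠ 0, w x ≤ k * (‖x‖ ^ 2) ^ ((1 - σ) / 2)) {a : E} (ha : a ≠ 0)
    (haw : w a = k * (‖a‖ ^ 2) ^ ((1 - σ) / 2)) {b : E} (hb : b ≠ 0) :
    w b = k * (‖b‖ ^ 2) ^ ((1 - σ) / 2) := by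
  by_contra hbw
  set v : E → ℝ := fun x => k * (‖x‖ ^ 2) ^ ((1 - σ) / 2) - w x with hv
  have hvc : ContinuousOn v {0}ᶜ :=
    (continuousOn_rpow_norm_sq k ((1 - σ) / 2)).sub h.continuousOn_limit
  obtain ⟨c, hc0, hcv, hcn⟩ : ∃ c ≠ 0, v c = 0 ∧ ∃ᶠ y in 𝓝 c, v y ≠ 0 := by
    by_contra! hcon
    have hpre : IsPreconnected ({0}ᶜ : Set E) :=
      (isConnected_compl_singleton_of_one_lt_rank (by
        rw [← Module.finrank_eq_rank]; exact_mod_cast hE) 0).isPreconnected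
    have hO1 : IsOpen {x | x ∈ ({0}ᶜ : Set E) ∧ v x ≠ 0} :=
      hvc.isOpen_inter_preimage isOpen_compl_singleton isOpen_compl_singleton
    have hO2 : IsOpen {x | x ∈ ({0}ᶜ : Set E) ∧ v x = 0} := by
      rw [isOpen_iff_mem_nhds]
      rintro x ⟨hx, hvx⟩
      have h1 : ∀ᶠ y in 𝓝 x, v y = 0 := by
        simpa [Filter.not_frequently] using hcon x hx hvx
      filter_upwards [h1, isOpen_compl_singleton.mem_nhds hx] with y h2 h3 using ⟨h3, h2⟩
    obtain ⟨x, -, hx1, hx2⟩ := hpre _ _ hO2 hO1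
      (fun x hx => (eq_or_ne (v x) 0).imp (fun h => ⟨hx, h⟩) fun h => ⟨hx, h⟩)
      ⟨a, ha, ha, by simp only [hv, haw, sub_self]⟩
      ⟨b, hb, hb, fun h0 => hbw (by simp only [hv] at h0; linarith)⟩
    exact hx2.2 hx1.2
  have hcpos : 0 < ‖c‖ := norm_pos_iff.2 hc0
  obtain ⟨y, hyv, hyc⟩ := (hcn.and_eventually (ball_mem_nhds c (by positivity : 0 < ‖c‖ / 4))).exists
  rw [dist_eq_norm] at hyc
  have hsub : closedBall y ‖y - c‖ ⊆ closedBall c (‖c‖ / 2) := by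
    refine closedBall_subset_closedBall' ?_
    rw [dist_eq_norm]
    linarith
  have hne : ∀ z ∈ closedBall y ‖y - c‖, z ≠ 0 := fun z hz =>
    norm_pos_of_mem_closedBall (by linarith) (hsub hz)
  set S := closedBall y ‖y - c‖ ∩ v ⁻¹' {0} with hS
  have hSclosed : IsClosed S :=
    (hvc.mono fun z hz => hne z hz).preimage_isClosed_of_isClosed isClosed_closedBall
      isClosed_singleton
  have hScomp : IsCompact S :=
    (isCompact_closedBall y _).of_isClosed_subset hSclosed inter_subset_left
  obtain ⟨x₀, hx₀, hmin⟩ := hScomp.exists_isMinOn (f := fun z => ‖z - y‖)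
    ⟨c, by rw [mem_closedBall, dist_eq_norm, norm_sub_rev], hcv⟩ (by fun_prop)
  have hx₀0 := hne x₀ hx₀.1
  have hx₀y : x₀ ≠ y := by
    rintro rfl
    exact hyv hx₀.2
  have hx₀b : ‖x₀ - y‖ ≤ ‖y - c‖ := by simpa [dist_eq_norm] using hx₀.1
  set y' := (1 / 2 : ℝ) • (x₀ + y) with hy'
  have e1 : x₀ - y' = (1 / 2 : ℝ) • (x₀ - y) := by
    rw [hy']
    module
  have hn1 : ‖x₀ - y'‖ = ‖x₀ - y‖ / 2 := by
    rw [e1, norm_smul]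
    norm_num
    ring
  refine h.not_touching hp hσ hσ1 hk hw hx₀0 (y := y') ?_ ?_ ?_
  · rw [← sub_ne_zero, e1]
    exact smul_ne_zero (by norm_num) (sub_ne_zero.2 hx₀y)
  · have : v x₀ = 0 := hx₀.2
    simp only [hv] at this
    linarith
  · intro z hz hz0 hzx
    refine lt_of_le_of_ne (hw z hz0) fun heq => hzx ?_
    have hvz : v z = 0 := by simp only [hv, heq, sub_self]
    rw [mem_closedBall, dist_eq_norm, hn1] at hz
    have e2 : (z - y') + (x₀ - y') = z - y := by
      rw [hy']
      module
    have hzy : ‖z - y‖ ≤ ‖x₀ - y‖ := by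
      rw [← e2]
      refine (norm_add_le _ _).trans ?_
      rw [hn1]
      linarith
    have hzS : z ∈ S := ⟨by rw [mem_closedBall, dist_eq_norm]; linarith, hvz⟩
    have hge : ‖x₀ - y‖ ≤ ‖z - y‖ := hmin hzS
    have hpar := parallelogram_law_with_norm ℝ (z - y') (x₀ - y')
    rw [e2, hn1, sub_sub_sub_cancel_right] at hpar
    have h3 : ‖z - y'‖ * ‖z - y'‖ ≤ ‖x₀ - y‖ / 2 * (‖x₀ - y‖ / 2) := by gcongr
    have h4 : ‖x₀ - y‖ * ‖x₀ - y‖ ≤ ‖z - y‖ * ‖z - y‖ := by gcongr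
    have h5 : ‖z - x₀‖ * ‖z - x₀‖ ≤ 0 := by linarith
    have h6 : ‖z - x₀‖ = 0 := by
      have := norm_nonneg (z - x₀)
      nlinarith
    exact sub_eq_zero.1 (norm_eq_zero.1 h6)

end BlowUp

section Asymptotics

variable {N : ℕ} {p : ℝ}

theorem tendsto_mup_atTop (hp : 1 < p) :
    Tendsto (mup N p) (𝓝[≠] 0) atTop := by
  have h0 : Tendsto (fun x : EuclideanSpace ℝ (Fin N) => ‖x‖) (𝓝[≠] 0) (𝓝[>] 0) :=
    tendsto_norm_nhdsNE_zero
  unfold mup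
  split_ifs with h
  · have h1 : (p - (N : ℝ)) / (p - 1) < 0 := div_neg_of_neg_of_pos (by linarith) (by linarith)
    have h2 : 0 < (p - 1) / ((N : ℝ) - p) := div_pos (by linarith) (by linarith)
    exact ((tendsto_rpow_neg_nhdsGT_zero h1).comp h0).const_mul_atTop h2
  · exact tendsto_neg_atBot_atTop.comp (Real.tendsto_log_nhdsGT_zero.comp h0)

theorem mup_congr {x y : EuclideanSpace ℝ (Fin N)} (h : ‖x‖ = ‖y‖) : mup N p x = mup N p y := by
  rw [mup, mup, h]

theorem tendsto_mup_ratio (hp : 1 < p) (hpN : p ≤ N) {y : EuclideanSpace ℝ (Fin N)} (hy : y ≠ 0) :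
    Tendsto (fun x : EuclideanSpace ℝ (Fin N) => mup N p (‖x‖ • y) / mup N p x) (𝓝[≠] 0)
      (𝓝 ((‖y‖ ^ 2) ^ ((1 - sigmaExp N p) / 2))) := by
  have hyn : 0 < ‖y‖ := norm_pos_iff.2 hy
  have hp1 : p - 1 ≠ 0 := by linarith
  have hpow : (‖y‖ ^ 2) ^ ((1 - sigmaExp N p) / 2) = ‖y‖ ^ ((p - N) / (p - 1)) := by
    rw [← Real.rpow_natCast, ← Real.rpow_mul hyn.le]
    congr 1
    rw [sigmaExp]
    push_cast
    field_simp
    ring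
  rw [hpow]
  have hpos : ∀ᶠ x in 𝓝[≠] (0 : EuclideanSpace ℝ (Fin N)), 0 < mup N p x :=
    (tendsto_mup_atTop hp).eventually_gt_atTop 0
  rcases hpN.lt_or_eq with h | h
  · refine tendsto_const_nhds.congr' ?_
    filter_upwards [hpos, self_mem_nhdsWithin] with x hx hx0
    have hxn : 0 < ‖x‖ := norm_pos_iff.2 hx0
    rw [eq_div_iff hx.ne', mup, mup, if_pos h, if_pos h, norm_smul, norm_norm,
      Real.mul_rpow hxn.le hyn.le]
    ring
  · rw [← h, sub_self, zero_div, Real.rpow_zero]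
    have h1 : Tendsto (fun x : EuclideanSpace ℝ (Fin N) => 1 + -Real.log ‖y‖ / mup N p x) (𝓝[≠] 0)
        (𝓝 (1 + 0)) :=
      ((tendsto_mup_atTop hp).const_div_atTop _).const_add 1
    rw [add_zero] at h1
    refine h1.congr' ?_
    filter_upwards [hpos, self_mem_nhdsWithin] with x hx hx0
    have hxn : 0 < ‖x‖ := norm_pos_iff.2 hx0
    have hlt : ¬ p < N := h.not_lt
    rw [eq_div_iff hx.ne', add_mul, div_mul_cancel₀ _ hx.ne', mup, mup, if_neg hlt, if_neg hlt,
      norm_smul, norm_norm, Real.log_mul hxn.ne' hyn.ne']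
    ring

variable {q : ℝ} {G : Set (EuclideanSpace ℝ (Fin N))} {u : EuclideanSpace ℝ (Fin N) → ℝ}

theorem eventually_norm_mul_lt {E : Type*} [NormedAddCommGroup E] (c : ℝ) {ε : ℝ} (hε : 0 < ε) :
    ∀ᶠ x in 𝓝[≠] (0 : E), 0 < ‖x‖ ∧ ‖x‖ * c < ε := by
  have h1 : Tendsto (fun x : E => ‖x‖ * c) (𝓝[≠] 0) (𝓝 0) := by
    have : Continuous fun x : E => ‖x‖ * c := by fun_prop
    simpa using (this.tendsto 0).mono_left nhdsWithin_le_nhds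
  filter_upwards [self_mem_nhdsWithin, h1.eventually_lt_const hε] with x h2 h3
  exact ⟨norm_pos_iff.2 h2, h3⟩

theorem IsStrongSolution.exists_upper_const (hu : IsStrongSolution p q G u) (hG : IsOpen G)
    (hN : 2 ≤ N) (hp : 1 < p) (hpN : p ≤ N) (hq : p - 1 < q) (hpos : ∀ x ∈ G, 0 ≤ u x)
    (hGb : ∀ x, 0 < ‖x‖ → ‖x‖ ≤ 1 → x ∈ G)
    (hliminf : ∃ m : ℝ, ∃ᶠ x in 𝓝[≠] (0 : EuclideanSpace ℝ (Fin N)), u x / mup N p x ≤ m) :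
    ∃ k : ℝ, 0 ≤ k ∧
      (∀ c > k, ∀ᶠ x in 𝓝[≠] (0 : EuclideanSpace ℝ (Fin N)), u x ≤ c * mup N p x) ∧
      (∀ c, 0 ≤ c → c < k → ∀ᶠ x in 𝓝[≠] (0 : EuclideanSpace ℝ (Fin N)),
        ∃ y, ‖y‖ = ‖x‖ ∧ c * mup N p y < u y) := by
  set C₀ := Real.exp (16 * gradC N p (q - p + 1)) with hC₀
  have hC₀pos : 0 < C₀ := Real.exp_pos _
  have hμ1 : ∀ᶠ x in 𝓝[≠] (0 : EuclideanSpace ℝ (Fin N)), 1 ≤ mup N p x :=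
    (tendsto_mup_atTop hp).eventually_ge_atTop 1
  set S : Set ℝ := {c | 0 ≤ c ∧ ∃ᶠ x in 𝓝[≠] (0 : EuclideanSpace ℝ (Fin N)),
    ∀ y, ‖y‖ = ‖x‖ → u y ≤ c * mup N p y} with hS
  have hSne : S.Nonempty := by
    obtain ⟨m, hm⟩ := hliminf
    refine ⟨C₀ * (|m| + 1), by positivity, ?_⟩
    refine (hm.and_eventually (hμ1.and (eventually_norm_mul_lt 1 one_half_pos))).mono ?_
    rintro x ⟨hx, hx1, hx0, hxh⟩ y hy
    rw [mul_one] at hxh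
    have h1 := hu.sphere_harnack hG hN hp hq hpos hGb hx0 hxh.le hy.symm
    rw [div_le_iff₀ (by linarith)] at hx
    have h2 : m * mup N p x ≤ |m| * mup N p x := by
      gcongr
      exact le_abs_self m
    rw [mup_congr hy]
    calc u y ≤ C₀ * (u x + 1) := by linarith
      _ ≤ C₀ * (|m| * mup N p x + mup N p x) := by gcongr; linarith
      _ = _ := by ring
  have hSbdd : BddBelow S := ⟨0, fun c hc => hc.1⟩
  refine ⟨sInf S, le_csInf hSne fun c hc => hc.1, ?_, ?_⟩
  · intro c hc
    obtain ⟨c', ⟨hc'0, hc'⟩, hlt⟩ := exists_lt_of_csInf_lt hSne hc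
    obtain ⟨x₁, hx₁⟩ : ∃ x : EuclideanSpace ℝ (Fin N), ‖x‖ = 1 / 2 := by
      have : Nontrivial (EuclideanSpace ℝ (Fin N)) := by
        have : Nonempty (Fin N) := ⟨⟨0, by omega⟩⟩
        infer_instance
      exact exists_norm_eq _ (by norm_num)
    set A := C₀ * (u x₁ + 1) + c' * |mup N p x₁| with hA
    have hux₁ := hpos x₁ (hGb x₁ (by rw [hx₁]; norm_num) (by rw [hx₁]; norm_num))
    have hA0 : 0 ≤ A := by positivity
    have hout : ∀ y : EuclideanSpace ℝ (Fin N), ‖y‖ = 1 / 2 → u y ≤ c' * mup N p y + A := by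
      intro y hy
      have h1 := hu.sphere_harnack hG hN hp hq hpos hGb (a := x₁) (b := y)
        (by rw [hx₁]; norm_num) hx₁.le (hx₁.trans hy.symm)
      have h2 : c' * -mup N p x₁ ≤ c' * |mup N p x₁| := by
        gcongr
        exact neg_le_abs _
      rw [mup_congr (hy.trans hx₁.symm)]
      linarith
    have hin : ∀ x : EuclideanSpace ℝ (Fin N), 0 < ‖x‖ → ‖x‖ ≤ 1 / 2 →
        u x ≤ c' * mup N p x + A := by
      intro x hx0 hxh
      have hev : ∀ᶠ y in 𝓝[≠] (0 : EuclideanSpace ℝ (Fin N)), 0 < ‖y‖ ∧ ‖y‖ * 1 < ‖x‖ :=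
        eventually_norm_mul_lt 1 hx0
      obtain ⟨x₂, h1, h2, h3⟩ := (hc'.and_eventually hev).exists
      rw [mul_one] at h3
      refine hu.le_of_le_on_spheres hG (by omega) hp hpN hGb h2 (by norm_num : (1 / 2 : ℝ) ≤ 1) hc'0
        (fun y hy => ?_) hout h3.le hxh
      linarith [h1 y hy]
    filter_upwards [(tendsto_mup_atTop hp).eventually_ge_atTop (A / (c - c')),
      eventually_norm_mul_lt 1 (one_half_pos : (0 : ℝ) < 1 / 2)] with x h1 h2
    rw [mul_one] at h2
    rw [div_le_iff₀ (by linarith)] at h1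
    linarith [hin x h2.1 h2.2.le]
  · intro c hc0 hc
    have h1 : ¬ ∃ᶠ x in 𝓝[≠] (0 : EuclideanSpace ℝ (Fin N)),
        ∀ y, ‖y‖ = ‖x‖ → u y ≤ c * mup N p y := fun h =>
      absurd (csInf_le hSbdd ⟨hc0, h⟩) (not_le.2 hc)
    rw [not_frequently] at h1
    filter_upwards [h1] with x hx
    push Not at hx
    exact hx

end Asymptotics

section Rescaling

variable {N : ℕ} {p q : ℝ} {G : Set (EuclideanSpace ℝ (Fin N))}
  {u : EuclideanSpace ℝ (Fin N) → ℝ}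

/-- The rescaling of `u` at the scale `‖x‖`, normalised by the fundamental solution. -/
noncomputable def rescale (p : ℝ) (u : EuclideanSpace ℝ (Fin N) → ℝ)
    (x y : EuclideanSpace ℝ (Fin N)) : ℝ :=
  u (‖x‖ • y) / mup N p x

theorem rescale_harnack (hu : IsStrongSolution p q G u) (hG : IsOpen G)
    (hN : 1 ≤ N) (hp : 1 < p) (hq : p - 1 < q) (hpos : ∀ x ∈ G, 0 ≤ u x)
    (hGb : ∀ x, 0 < ‖x‖ → ‖x‖ ≤ 1 → x ∈ G) {ξ : EuclideanSpace ℝ (Fin N)} (hξ : ξ ≠ 0) :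
    ∃ K : ℝ, ∀ᶠ x in 𝓝[≠] (0 : EuclideanSpace ℝ (Fin N)), ∀ y ∈ closedBall ξ (‖ξ‖ / 2),
      ∀ y' ∈ closedBall ξ (‖ξ‖ / 2), rescale p u x y' + 1 / mup N p x ≤
        (rescale p u x y + 1 / mup N p x) * Real.exp (K * ‖y' - y‖) := by
  have hξn : 0 < ‖ξ‖ := norm_pos_iff.2 hξ
  refine ⟨2 * gradC N p (q - p + 1) / (‖ξ‖ / 2), ?_⟩
  filter_upwards [(tendsto_mup_atTop hp).eventually_gt_atTop 0,
    eventually_norm_mul_lt (‖ξ‖ + ‖ξ‖ / 2) one_half_pos] with x hM hx y hy y' hy'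
  obtain ⟨hx0, hxs⟩ := hx
  have hbd : ∀ z ∈ closedBall ξ (‖ξ‖ / 2), ‖x‖ * (‖ξ‖ / 2) ≤ ‖‖x‖ • z‖ ∧ ‖‖x‖ • z‖ ≤ 1 / 2 := by
    intro z hz
    rw [mem_closedBall, dist_eq_norm] at hz
    have n1 : ‖ξ‖ ≤ ‖z - ξ‖ + ‖z‖ := by
      have := norm_sub_le z (z - ξ)
      rw [sub_sub_cancel] at this
      linarith
    have n2 : ‖z‖ ≤ ‖z - ξ‖ + ‖ξ‖ := by
      have := norm_add_le (z - ξ) ξ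
      rwa [sub_add_cancel] at this
    rw [norm_smul, norm_norm]
    constructor
    · gcongr
      linarith
    · refine le_trans ?_ hxs.le
      gcongr
      linarith
  have hseg : ∀ z ∈ segment ℝ (‖x‖ • y) (‖x‖ • y'), ‖x‖ * (‖ξ‖ / 2) ≤ ‖z‖ ∧ ‖z‖ ≤ 1 / 2 := by
    rintro z ⟨s, t, hs, ht, hst, rfl⟩
    have h1 : s • ‖x‖ • y + t • ‖x‖ • y' = ‖x‖ • (s • y + t • y') := by module
    rw [h1]
    exact hbd _ ((convex_closedBall ξ _) hy hy' hs ht hst)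
  have key := hu.abs_log_sub_le hG hN hp hq hpos hGb (ρ := ‖x‖ * (‖ξ‖ / 2)) (by positivity) hseg
  have hmem : ∀ z ∈ closedBall ξ (‖ξ‖ / 2), 0 ≤ u (‖x‖ • z) := fun z hz =>
    hpos _ (hGb _ (lt_of_lt_of_le (by positivity) (hbd z hz).1)
      ((hbd z hz).2.trans (by norm_num)))
  have h0 := hmem y hy
  have h0' := hmem y' hy'
  have h1 : Real.log (u (‖x‖ • y') + 1) ≤ Real.log (u (‖x‖ • y) + 1) +
      2 * gradC N p (q - p + 1) / (‖ξ‖ / 2) * ‖y' - y‖ := by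
    have h2 := (le_abs_self _).trans key
    rw [← smul_sub, norm_smul, norm_norm] at h2
    have h3 : 2 * gradC N p (q - p + 1) / (‖x‖ * (‖ξ‖ / 2)) * (‖x‖ * ‖y' - y‖) =
        2 * gradC N p (q - p + 1) / (‖ξ‖ / 2) * ‖y' - y‖ := by
      field_simp
    linarith
  have h4 : u (‖x‖ • y') + 1 ≤ (u (‖x‖ • y) + 1) *
      Real.exp (2 * gradC N p (q - p + 1) / (‖ξ‖ / 2) * ‖y' - y‖) := by
    have h5 := Real.exp_le_exp.2 h1
    rwa [Real.exp_add, Real.exp_log (by linarith), Real.exp_log (by linarith)] at h5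
  rw [rescale, rescale, ← add_div, ← add_div, div_mul_eq_mul_div]
  gcongr

theorem rescale_mem {ξ z x : EuclideanSpace ℝ (Fin N)} {s : ℝ} (hs : s < ‖ξ‖)
    (hGb : ∀ x, 0 < ‖x‖ → ‖x‖ ≤ 1 → x ∈ G) (hx0 : 0 < ‖x‖) (hx : ‖x‖ * (2 * ‖ξ‖) < 1)
    (hz : z ∈ closedBall ξ s) : ‖x‖ • z ∈ G := by
  have hz0 := norm_pos_iff.2 (norm_pos_of_mem_closedBall hs hz)
  rw [mem_closedBall, dist_eq_norm] at hz
  have n2 : ‖z‖ ≤ ‖z - ξ‖ + ‖ξ‖ := by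
    have := norm_add_le (z - ξ) ξ
    rwa [sub_add_cancel] at this
  refine hGb _ ?_ ?_
  · rw [norm_smul, norm_norm]
    positivity
  · rw [norm_smul, norm_norm]
    refine le_trans ?_ hx.le
    gcongr
    linarith

theorem rescale_continuousOn (hu : IsStrongSolution p q G u)
    (hGb : ∀ x, 0 < ‖x‖ → ‖x‖ ≤ 1 → x ∈ G) {ξ : EuclideanSpace ℝ (Fin N)} {s : ℝ}
    (hs : s < ‖ξ‖) :
    ∀ᶠ x in 𝓝[≠] (0 : EuclideanSpace ℝ (Fin N)),
      ContinuousOn (rescale p u x) (closedBall ξ s) := by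
  filter_upwards [eventually_norm_mul_lt (2 * ‖ξ‖) one_pos] with x hx
  refine ContinuousOn.div_const (hu.1.continuousOn.comp (by fun_prop) fun z hz => ?_) _
  exact rescale_mem hs hGb hx.1 hx.2 hz

theorem rescale_touch (hu : IsStrongSolution p q G u) (hG : IsOpen G) (hp : 1 < p)
    (hGb : ∀ x, 0 < ‖x‖ → ‖x‖ ≤ 1 → x ∈ G) {ξ : EuclideanSpace ℝ (Fin N)} {s : ℝ}
    (hs : s < ‖ξ‖) :
    ∀ᶠ x in 𝓝[≠] (0 : EuclideanSpace ℝ (Fin N)), ∀ z ∈ ball ξ s,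
      ∀ (ψ : EuclideanSpace ℝ (Fin N) → ℝ) (g : EuclideanSpace ℝ (Fin N))
        (B : EuclideanSpace ℝ (Fin N) →L[ℝ] EuclideanSpace ℝ (Fin N)),
      HasHess ψ z g B → g ≠ 0 → IsLocalMax (fun y => rescale p u x y - ψ y) z →
        0 ≤ pForm p g B := by
  filter_upwards [(tendsto_mup_atTop hp).eventually_gt_atTop 0,
    eventually_norm_mul_lt (2 * ‖ξ‖) one_pos] with x hM hx z hz ψ g B hH hg hmax
  have hx0 := hx.1.ne'
  have hzG : ‖x‖ • z ∈ G := rescale_mem hs hGb hx.1 hx.2 (ball_subset_closedBall hz)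
  have hinv : ‖x‖⁻¹ • ‖x‖ • z = z := inv_smul_smul₀ hx0 z
  have hH' := (HasHess.comp_smul (x := ‖x‖ • z) (s := ‖x‖⁻¹) (hinv.symm ▸ hH)).const_mul (mup N p x)
  have hloc : IsLocalMax (fun y => u y - mup N p x * ψ (‖x‖⁻¹ • y)) (‖x‖ • z) := by
    have hc : Tendsto (fun y : EuclideanSpace ℝ (Fin N) => ‖x‖⁻¹ • y) (𝓝 (‖x‖ • z)) (𝓝 z) := by
      have h1 : Continuous fun y : EuclideanSpace ℝ (Fin N) => ‖x‖⁻¹ • y := by fun_prop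
      have h2 := h1.tendsto (‖x‖ • z)
      rwa [hinv] at h2
    have h3 : ∀ y, u y - mup N p x * ψ (‖x‖⁻¹ • y) =
        mup N p x * (rescale p u x (‖x‖⁻¹ • y) - ψ (‖x‖⁻¹ • y)) := by
      intro y
      rw [rescale, smul_inv_smul₀ hx0, mul_sub, mul_div_cancel₀ _ hM.ne']
    filter_upwards [hc.eventually hmax] with y hy
    rw [h3, h3, hinv]
    gcongr
  have h4 := hu.touch hG hp hzG
    (smul_ne_zero hM.ne' (smul_ne_zero (inv_ne_zero hx0) hg)) hH' hloc
  rw [pForm_smul, pForm_smul, pForm_smul_left, pForm_smul_left] at h4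
  have h5 : mup N p x * (‖x‖⁻¹ ^ 2 * (mup N p x ^ 2 * (‖x‖⁻¹ ^ 2 * pForm p g B))) =
      mup N p x * (‖x‖⁻¹ ^ 2 * (mup N p x ^ 2 * ‖x‖⁻¹ ^ 2)) * pForm p g B := by ring
  rw [h5] at h4
  have h6 := hx.1
  exact nonneg_of_mul_nonneg_right h4 (by positivity)

theorem exists_isBlowUp (hu : IsStrongSolution p q G u) (hG : IsOpen G)
    (hN : 1 ≤ N) (hp : 1 < p) (hpN : p ≤ N) (hq : p - 1 < q) (hpos : ∀ x ∈ G, 0 ≤ u x)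
    (hGb : ∀ x, 0 < ‖x‖ → ‖x‖ ≤ 1 → x ∈ G) {k : ℝ}
    (hup : ∀ c > k, ∀ᶠ x in 𝓝[≠] (0 : EuclideanSpace ℝ (Fin N)), u x ≤ c * mup N p x)
    {𝒰 : Ultrafilter (EuclideanSpace ℝ (Fin N))}
    (h𝒰 : (𝒰 : Filter (EuclideanSpace ℝ (Fin N))) ≤ 𝓝[≠] 0) :
    ∃ w, IsBlowUp 𝒰 p (rescale p u) (fun x => 1 / mup N p x) w ∧
      ∀ y ≠ 0, w y ≤ k * (‖y‖ ^ 2) ^ ((1 - sigmaExp N p) / 2) := by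
  have hbound : ∀ y : EuclideanSpace ℝ (Fin N), y ≠ 0 → ∀ c > k,
      ∀ᶠ x in 𝓝[≠] (0 : EuclideanSpace ℝ (Fin N)),
        0 ≤ rescale p u x y ∧ rescale p u x y ≤ c * (mup N p (‖x‖ • y) / mup N p x) := by
    intro y hy c hc
    have hyn := norm_pos_iff.2 hy
    have ht : Tendsto (fun x : EuclideanSpace ℝ (Fin N) => ‖x‖ • y) (𝓝[≠] 0) (𝓝[≠] 0) := by
      refine tendsto_nhdsWithin_iff.2 ⟨?_, ?_⟩
      · have h1 : Continuous fun x : EuclideanSpace ℝ (Fin N) => ‖x‖ • y := by fun_prop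
        simpa using (h1.tendsto 0).mono_left nhdsWithin_le_nhds
      · filter_upwards [self_mem_nhdsWithin] with x hx
        exact smul_ne_zero (norm_ne_zero_iff.2 hx) hy
    filter_upwards [ht.eventually (hup c hc), (tendsto_mup_atTop hp).eventually_gt_atTop 0,
      eventually_norm_mul_lt ‖y‖ one_pos] with x h1 hM hx
    constructor
    · refine div_nonneg (hpos _ (hGb _ ?_ ?_)) hM.le
      · rw [norm_smul, norm_norm]
        exact mul_pos hx.1 hyn
      · rw [norm_smul, norm_norm]
        exact hx.2.le
    · rw [rescale, ← mul_div_assoc]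
      gcongr
  have hlim : ∀ y : EuclideanSpace ℝ (Fin N), ∃ l : ℝ, y ≠ 0 →
      Tendsto (fun x => rescale p u x y) 𝒰 (𝓝 l) := by
    intro y
    by_cases hy : y = 0
    · exact ⟨0, fun h => absurd hy h⟩
    set L := (k + 1) * (‖y‖ ^ 2) ^ ((1 - sigmaExp N p) / 2)
    have h1 : ∀ᶠ x in 𝓝[≠] (0 : EuclideanSpace ℝ (Fin N)), rescale p u x y ∈ Icc 0 (L + 1) := by
      have h2 : Tendsto (fun x => (k + 1) * (mup N p (‖x‖ • y) / mup N p x)) (𝓝[≠] 0) (𝓝 L) :=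
        (tendsto_mup_ratio hp hpN hy).const_mul _
      filter_upwards [hbound y hy (k + 1) (by linarith),
        h2.eventually_lt_const (lt_add_one L)] with x h3 h4
      exact ⟨h3.1, h3.2.trans h4.le⟩
    obtain ⟨l, -, hl⟩ := (isCompact_Icc (a := (0 : ℝ)) (b := L + 1)).ultrafilter_le_nhds
      (𝒰.map fun x => rescale p u x y) (le_principal_iff.2 (h1.filter_mono h𝒰))
    exact ⟨l, fun _ => hl⟩
  choose w hw using hlim
  refine ⟨w, ⟨?_, hw, ?_, ?_, ?_⟩, ?_⟩
  · exact ((tendsto_mup_atTop hp).const_div_atTop 1).mono_left h𝒰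
  · intro ξ hξ
    obtain ⟨K, hK⟩ := rescale_harnack hu hG hN hp hq hpos hGb hξ
    exact ⟨K, hK.filter_mono h𝒰⟩
  · exact fun ξ s hs => (rescale_continuousOn hu hGb hs).filter_mono h𝒰
  · exact fun ξ s hs => (rescale_touch hu hG hp hGb hs).filter_mono h𝒰
  · intro y hy
    have h1 : ∀ c > k, w y ≤ c * (‖y‖ ^ 2) ^ ((1 - sigmaExp N p) / 2) := fun c hc =>
      le_of_tendsto_of_tendsto (hw y hy)
        (((tendsto_mup_ratio hp hpN hy).const_mul c).mono_left h𝒰)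
        (((hbound y hy c hc).mono fun x hx => hx.2).filter_mono h𝒰)
    have h2 : Tendsto (fun c : ℝ => c * (‖y‖ ^ 2) ^ ((1 - sigmaExp N p) / 2)) (𝓝[>] k)
        (𝓝 (k * (‖y‖ ^ 2) ^ ((1 - sigmaExp N p) / 2))) :=
      ((continuous_id.mul continuous_const).tendsto k).mono_left nhdsWithin_le_nhds
    exact ge_of_tendsto h2 (by filter_upwards [self_mem_nhdsWithin] with c hc using h1 c hc)

theorem tendsto_of_upper_const (hu : IsStrongSolution p q G u) (hG : IsOpen G)
    (hN : 2 ≤ N) (hp : 1 < p) (hpN : p ≤ N) (hq : p - 1 < q) (hpos : ∀ x ∈ G, 0 ≤ u x)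
    (hGb : ∀ x, 0 < ‖x‖ → ‖x‖ ≤ 1 → x ∈ G) {k : ℝ} (hk : 0 ≤ k)
    (hup : ∀ c > k, ∀ᶠ x in 𝓝[≠] (0 : EuclideanSpace ℝ (Fin N)), u x ≤ c * mup N p x)
    (hlow : ∀ c, 0 ≤ c → c < k → ∀ᶠ x in 𝓝[≠] (0 : EuclideanSpace ℝ (Fin N)),
        ∃ y, ‖y‖ = ‖x‖ ∧ c * mup N p y < u y) :
    Tendsto (fun x => u x / mup N p x) (𝓝[≠] 0) (𝓝 k) := by
  have hM : ∀ᶠ x in 𝓝[≠] (0 : EuclideanSpace ℝ (Fin N)), 0 < mup N p x :=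
    (tendsto_mup_atTop hp).eventually_gt_atTop 0
  refine tendsto_order.2 ⟨fun c hc => ?_, fun c hc => ?_⟩
  swap
  · filter_upwards [hup ((k + c) / 2) (by linarith), hM] with x h1 h2
    rw [div_lt_iff₀ h2]
    nlinarith
  rcases hk.eq_or_lt with hk0 | hk0
  · filter_upwards [hM, eventually_norm_mul_lt 1 one_pos] with x h1 h2
    have := hpos x (hGb x h2.1 (by linarith))
    have : 0 ≤ u x / mup N p x := by positivity
    linarith
  by_contra hcon
  rw [not_eventually] at hcon
  have hne : NeBot (𝓝[≠] (0 : EuclideanSpace ℝ (Fin N)) ⊓ 𝓟 {x | ¬ c < u x / mup N p x}) :=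
    frequently_mem_iff_neBot.1 hcon
  set 𝒰 := Ultrafilter.of (𝓝[≠] (0 : EuclideanSpace ℝ (Fin N)) ⊓ 𝓟 {x | ¬ c < u x / mup N p x})
  have hle : (𝒰 : Filter (EuclideanSpace ℝ (Fin N))) ≤ 𝓝[≠] 0 :=
    (Ultrafilter.of_le _).trans inf_le_left
  have hmem : ∀ᶠ x in (𝒰 : Filter (EuclideanSpace ℝ (Fin N))), u x / mup N p x ≤ c := by
    have h1 : ∀ᶠ x in (𝒰 : Filter (EuclideanSpace ℝ (Fin N))), ¬ c < u x / mup N p x :=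
      ((Ultrafilter.of_le _).trans inf_le_right) (mem_principal_self _)
    exact h1.mono fun x hx => not_lt.1 hx
  have hx0 : ∀ᶠ x in (𝒰 : Filter (EuclideanSpace ℝ (Fin N))), x ≠ 0 :=
    hle self_mem_nhdsWithin
  obtain ⟨w, hw, hwk⟩ := exists_isBlowUp hu hG (by omega) hp hpN hq hpos hGb hup hle
  have hS0 : ∀ z ∈ sphere (0 : EuclideanSpace ℝ (Fin N)) 1, z ≠ 0 := fun z hz =>
    ne_of_mem_sphere hz one_ne_zero
  have hSval : ∀ z ∈ sphere (0 : EuclideanSpace ℝ (Fin N)) 1,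
      k * (‖z‖ ^ 2) ^ ((1 - sigmaExp N p) / 2) = k := by
    intro z hz
    rw [mem_sphere_zero_iff_norm.1 hz]
    simp
  have hlimpt : ∀ ζ : EuclideanSpace ℝ (Fin N) → EuclideanSpace ℝ (Fin N),
      (∀ᶠ x in (𝒰 : Filter (EuclideanSpace ℝ (Fin N))), ζ x ∈ sphere 0 1) →
      ∃ a ∈ sphere (0 : EuclideanSpace ℝ (Fin N)) 1,
        Tendsto (fun x => rescale p u x (ζ x)) 𝒰 (𝓝 (w a)) := by
    intro ζ hζ
    obtain ⟨a, ha, hlim⟩ := (isCompact_sphere (0 : EuclideanSpace ℝ (Fin N)) 1).ultrafilter_le_nhds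
      (𝒰.map ζ) (le_principal_iff.2 hζ)
    exact ⟨a, ha, hw.tendsto_moving (hS0 a ha) hlim⟩
  have hunit : ∀ x y : EuclideanSpace ℝ (Fin N), x ≠ 0 → ‖y‖ = ‖x‖ →
      ‖x‖⁻¹ • y ∈ sphere (0 : EuclideanSpace ℝ (Fin N)) 1 := by
    intro x y hx hy
    rw [mem_sphere_zero_iff_norm, norm_smul, norm_inv, norm_norm, hy,
      inv_mul_cancel₀ (norm_ne_zero_iff.2 hx)]
  have hresc : ∀ x y : EuclideanSpace ℝ (Fin N), x ≠ 0 →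
      rescale p u x (‖x‖⁻¹ • y) = u y / mup N p x := by
    intro x y hx
    rw [rescale, smul_inv_smul₀ (norm_ne_zero_iff.2 hx)]
  obtain ⟨b, hb, hbl⟩ := hlimpt (fun x => ‖x‖⁻¹ • x) (hx0.mono fun x hx => hunit x x hx rfl)
  have hwb : w b ≤ c := by
    refine le_of_tendsto hbl ?_
    filter_upwards [hmem, hx0] with x h1 h2
    rwa [hresc x x h2]
  have hmaxpt : ∀ᶠ x in (𝒰 : Filter (EuclideanSpace ℝ (Fin N))), ∃ z,
      ‖z‖ = ‖x‖ ∧ ∀ y, ‖y‖ = ‖x‖ → u y ≤ u z := by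
    filter_upwards [(eventually_norm_mul_lt 1 one_pos).filter_mono hle] with x hx
    rw [mul_one] at hx
    have hc : ContinuousOn u (sphere 0 ‖x‖) := hu.1.continuousOn.mono fun y hy => by
      rw [mem_sphere_zero_iff_norm] at hy
      exact hGb y (hy ▸ hx.1) (hy ▸ hx.2.le)
    obtain ⟨z, hz, hmax⟩ := (isCompact_sphere (0 : EuclideanSpace ℝ (Fin N)) ‖x‖).exists_isMaxOn
      ⟨x, by simp⟩ hc
    exact ⟨z, by simpa using hz, fun y hy => hmax (by simpa using hy)⟩
  choose! ζ hζn hζ using fun (x : EuclideanSpace ℝ (Fin N))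
    (hx : ∃ z : EuclideanSpace ℝ (Fin N), ‖z‖ = ‖x‖ ∧
      ∀ y : EuclideanSpace ℝ (Fin N), ‖y‖ = ‖x‖ → u y ≤ u z) => hx
  obtain ⟨a, ha, hal⟩ := hlimpt (fun x => ‖x‖⁻¹ • ζ x) (by
    filter_upwards [hmaxpt, hx0] with x h1 h2 using hunit x (ζ x) h2 (hζn x h1))
  have hwa : k ≤ w a := by
    refine le_of_forall_lt_imp_le_of_dense fun c' hc' => ?_
    refine (le_max_left c' 0).trans ?_
    refine ge_of_tendsto hal ?_
    filter_upwards [hmaxpt, hx0, (hlow (max c' 0) (le_max_right _ _)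
      (max_lt hc' hk0)).filter_mono hle, hM.filter_mono hle] with x h1 h2 h3 h4
    obtain ⟨y, hy1, hy2⟩ := h3
    rw [hresc x (ζ x) h2, le_div_iff₀ h4, ← mup_congr hy1]
    exact hy2.le.trans (hζ x h1 y hy1)
  have hσ : (1 + sigmaExp N p) * (p - 1) =
      Module.finrank ℝ (EuclideanSpace ℝ (Fin N)) + p - 2 := by
    rw [finrank_euclideanSpace_fin, sigmaExp, add_mul, div_mul_cancel₀ _ (by linarith)]
    ring
  have hfin := hw.eq_of_eq hp (by rw [finrank_euclideanSpace_fin]; omega) hσ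
    (one_le_sigmaExp hp hpN) hk0 hwk (hS0 a ha)
    (le_antisymm (hwk a (hS0 a ha)) (by rwa [hSval a ha])) (hS0 b hb)
  rw [hSval b hb] at hfin
  linarith

end Rescaling

/-- If `u/μ_p` has finite liminf at the singularity, it has a limit `k ≥ 0`. -/
theorem singularity_weak (N : ℕ) (hN : 2 ≤ N) (p q : ℝ) (hp1 : 1 < p) (hpN : p ≤ N)
    (hq1 : p - 1 < q) (hq2 : q < (N : ℝ) * (p - 1) / ((N : ℝ) - 1))
    (Ω : Set (EuclideanSpace ℝ (Fin N))) (hΩ : IsOpen Ω)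
    (hball : Metric.closedBall (0 : EuclideanSpace ℝ (Fin N)) 1 ⊆ Ω)
    (u : EuclideanSpace ℝ (Fin N) → ℝ) (hu : IsStrongSolution p q (Ω \ {0}) u)
    (hpos : ∀ x ∈ Ω \ {0}, 0 ≤ u x)
    (hliminf : ∃ m : ℝ, ∃ᶠ x in 𝓝[≠] (0 : EuclideanSpace ℝ (Fin N)), u x / mup N p x ≤ m) :
    ∃ k : ℝ, 0 ≤ k ∧
      Filter.Tendsto (fun x => u x / mup N p x) (𝓝[≠] (0 : EuclideanSpace ℝ (Fin N)))
        (nhds k) := by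
  have hG : IsOpen (Ω \ {0}) := hΩ.sdiff isClosed_singleton
  have hGb : ∀ x : EuclideanSpace ℝ (Fin N), 0 < ‖x‖ → ‖x‖ ≤ 1 → x ∈ Ω \ {0} := fun x h1 h2 =>
    ⟨hball (by simpa using h2), norm_pos_iff.1 h1⟩
  obtain ⟨k, hk, hup, hlow⟩ := hu.exists_upper_const hG hN hp1 hpN hq1 hpos hGb hliminf
  exact ⟨k, hk, tendsto_of_upper_const hu hG hN hp1 hpN hq1 hpos hGb hk hup hlow⟩
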